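/- arXiv:1605.07532 — 2 statements merged into one kernel-verified Lean document; each statement's English description precedes it below -/
import Mathlib

section
/- Fix P ∈ ℝ and let V : ℝ → ℝ be continuous, 1-periodic, with min V = 0 and max V < 1. Let H̄(P) ∈ ℝ be a constant such that the equation (|P + u'(x)|² − 1)² − V(x) = H̄(P) on 𝕋 admits a continuous 1-periodic viscosity solution. For each ε > 0 let u^ε be a continuous 1-periodic viscosity solution of ε u^ε(x) + (|P + (u^ε)'(x)|² − 1)² − V(x) = 0 on 𝕋. Then there exists a continuous 1-periodic viscosity solution u⁰ of (|P + (u⁰)'(x)|² − 1)² − V(x) = H̄(P) on 𝕋 such that u^ε + H̄(P)/ε converges uniformly to u⁰ as ε → 0⁺. -/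
open Filter Set
open scoped Topology

noncomputable section

/-- Viscosity subsolution of `E(x, u(x), u'(x)) = 0` on `ℝ`. -/
def ViscSub1 (E : ℝ → ℝ → ℝ → ℝ) (u : ℝ → ℝ) : Prop :=
  ∀ φ : ℝ → ℝ, ContDiff ℝ 1 φ → ∀ x₀ : ℝ, IsLocalMax (u - φ) x₀ →
    E x₀ (u x₀) (deriv φ x₀) ≤ 0

/-- Viscosity supersolution of `E(x, u(x), u'(x)) = 0` on `ℝ`. -/
def ViscSuper1 (E : ℝ → ℝ → ℝ → ℝ) (u : ℝ → ℝ) : Prop :=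
  ∀ φ : ℝ → ℝ, ContDiff ℝ 1 φ → ∀ x₀ : ℝ, IsLocalMin (u - φ) x₀ →
    0 ≤ E x₀ (u x₀) (deriv φ x₀)

/-- Viscosity solution of `E(x, u(x), u'(x)) = 0` on `ℝ`. -/
def ViscSol1 (E : ℝ → ℝ → ℝ → ℝ) (u : ℝ → ℝ) : Prop :=
  ViscSub1 E u ∧ ViscSuper1 E u

/-- Bound of a continuous periodic function. -/
lemma per_bdd {u : ℝ → ℝ} (hc : Continuous u) (hp : Function.Periodic u 1) :
    ∃ M : ℝ, 0 ≤ M ∧ ∀ x, |u x| ≤ M := by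
  obtain ⟨M, hM⟩ := (hp.isBounded_of_continuous one_ne_zero hc).exists_norm_le
  refine ⟨M, le_trans (norm_nonneg _) (hM (u 0) ⟨0, rfl⟩), fun x => hM (u x) ⟨x, rfl⟩⟩

/-- Comparison principle for the discounted equation. -/
lemma comparison {ε : ℝ} (hε : 0 < ε) {G V u v : ℝ → ℝ} (hV : Continuous V)
    (huc : Continuous u) (hup : Function.Periodic u 1)
    (hvc : Continuous v) (hvp : Function.Periodic v 1)
    (hu : ViscSub1 (fun x r p => ε * r + G p - V x) u)
    (hv : ViscSuper1 (fun x r p => ε * r + G p - V x) v) : ∀ z, u z ≤ v z := by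
  intro z
  refine le_of_forall_pos_le_add fun κ hκ => ?_
  obtain ⟨Mv, hMv0, hMv⟩ := per_bdd hvc hvp
  have hUC := (isCompact_Icc (a := (-1 : ℝ)) (b := 2)).uniformContinuousOn_of_continuous
    hV.continuousOn
  rw [Metric.uniformContinuousOn_iff] at hUC
  obtain ⟨δ, hδ, hVδ⟩ := hUC (ε * κ) (by positivity)
  obtain ⟨n, hn0, hn⟩ : ∃ n : ℝ, 0 < n ∧ 2 * Mv < n * δ ^ 2 := by
    refine ⟨(2 * Mv + 1) / δ ^ 2, by positivity, ?_⟩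
    rw [div_mul_cancel₀ _ (by positivity)]; linarith
  set Φ : ℝ × ℝ → ℝ := fun q => u q.1 - v (q.1 + q.2) - n * q.2 ^ 2 with hΦ
  have hΦc : Continuous Φ := by fun_prop
  obtain ⟨⟨xh, th⟩, hmem, hmax⟩ := (isCompact_Icc.prod isCompact_Icc :
    IsCompact (Icc (0 : ℝ) 1 ×ˢ Icc (-1 : ℝ) 1)).exists_isMaxOn
      ⟨(0, 0), by constructor <;> constructor <;> norm_num⟩ hΦc.continuousOn
  have hmax' : ∀ x t : ℝ, t ∈ Icc (-1 : ℝ) 1 → Φ (x, t) ≤ Φ (xh, th) := by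
    intro x t ht
    have h1 : Φ (x, t) = Φ (Int.fract x, t) := by
      simp only [hΦ]
      have e1 : u (Int.fract x) = u x := by
        have := hup.sub_int_mul_eq (x := x) ⌊x⌋
        rw [mul_one] at this; exact this
      have e2 : v (Int.fract x + t) = v (x + t) := by
        have := hvp.sub_int_mul_eq (x := x + t) ⌊x⌋
        rw [← this]; congr 1; rw [← Int.self_sub_floor]; ring
      rw [e1, e2]
    rw [h1]
    exact hmax (show (Int.fract x, t) ∈ Icc (0 : ℝ) 1 ×ˢ Icc (-1 : ℝ) 1 from
      ⟨⟨Int.fract_nonneg x, (Int.fract_lt_one x).le⟩, ht⟩)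
  obtain ⟨hx, ht⟩ := hmem
  simp only [mem_Icc] at hx ht
  have h0 := hmax' xh 0 (by constructor <;> norm_num)
  have hz := hmax' z 0 (by constructor <;> norm_num)
  simp only [hΦ, add_zero] at h0 hz
  have ht1 : -1 < th := by
    rcases ht.1.lt_or_eq with h | h
    · exact h
    · exfalso
      have : v (xh + th) = v xh := by rw [← h, ← hvp (xh + -1)]; congr 1; ring
      rw [this, ← h] at h0; nlinarith
  have ht2 : th < 1 := by
    rcases ht.2.lt_or_eq with h | h
    · exact h
    · exfalso
      have : v (xh + th) = v xh := by rw [h, hvp xh]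
      rw [this, h] at h0; nlinarith
  have htδ : |th| < δ := by
    have h1 := abs_le.1 (hMv xh)
    have h2 := abs_le.1 (hMv (xh + th))
    have h3 : n * th ^ 2 < n * δ ^ 2 := by nlinarith
    have h4 : th ^ 2 < δ ^ 2 := lt_of_mul_lt_mul_left h3 hn0.le
    exact abs_lt_of_sq_lt_sq h4 hδ.le
  have hsub := hu (fun x => n * (x - (xh + th)) ^ 2) (by fun_prop) xh (by
    have hnb : ∀ᶠ x in 𝓝 xh, (xh + th) - x ∈ Icc (-1 : ℝ) 1 := by
      have : ContinuousAt (fun x => (xh + th) - x) xh := by fun_prop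
      exact this (Icc_mem_nhds (by simpa using ht1) (by simpa using ht2))
    filter_upwards [hnb] with x hx'
    have := hmax' x _ hx'
    simp only [hΦ] at this
    simp only [Pi.sub_apply]
    rw [show x + (xh + th - x) = xh + th by ring] at this
    nlinarith)
  have hsup := hv (fun y => - (n * (xh - y) ^ 2)) (by fun_prop) (xh + th) (by
    have hnb : ∀ᶠ y in 𝓝 (xh + th), y - xh ∈ Icc (-1 : ℝ) 1 := by
      have : ContinuousAt (fun y => y - xh) (xh + th) := by fun_prop
      exact this (Icc_mem_nhds (by simpa using ht1) (by simpa using ht2))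
    filter_upwards [hnb] with y hy'
    have := hmax' xh _ hy'
    simp only [hΦ] at this
    simp only [Pi.sub_apply]
    rw [show xh + (y - xh) = y by ring] at this
    nlinarith)
  have d1 : deriv (fun x => n * (x - (xh + th)) ^ 2) xh = -(2 * n * th) := by
    have : HasDerivAt (fun x => n * (x - (xh + th)) ^ 2)
        (n * ((2 : ℕ) * (xh - (xh + th)) ^ (2 - 1) * 1)) xh :=
      (((hasDerivAt_id xh).sub_const (xh + th)).pow 2).const_mul n
    rw [this.deriv]; push_cast; ring
  have d2 : deriv (fun y => - (n * (xh - y) ^ 2)) (xh + th) = -(2 * n * th) := by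
    have : HasDerivAt (fun y => - (n * (xh - y) ^ 2))
        (-(n * ((2 : ℕ) * (xh - (xh + th)) ^ (2 - 1) * (-1)))) (xh + th) :=
      ((((hasDerivAt_id (xh + th)).const_sub xh).pow 2).const_mul n).neg
    rw [this.deriv]; push_cast; ring
  rw [d1] at hsub
  rw [d2] at hsup
  have hVd := hVδ xh ⟨by linarith, by linarith⟩ (xh + th) ⟨by linarith, by linarith⟩
    (by rw [Real.dist_eq, abs_sub_comm]; simpa using htδ)
  rw [Real.dist_eq, abs_lt] at hVd
  have h5 : ε * (u xh - v (xh + th)) < ε * κ := by nlinarith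
  have h6 := lt_of_mul_lt_mul_left h5 hε.le
  nlinarith [sq_nonneg th]

/-- Touching points from above are dense. -/
lemma touch_dense {u : ℝ → ℝ} (hu : Continuous u) (z r : ℝ) (hr : 0 < r) :
    ∃ φ : ℝ → ℝ, ContDiff ℝ 1 φ ∧ ∃ x, |x - z| < r ∧ IsLocalMax (u - φ) x := by
  obtain ⟨K, hK⟩ : ∃ K : ℝ, |u (z - r)| + |u (z + r)| + |u z| < K * r ^ 2 := by
    refine ⟨(|u (z - r)| + |u (z + r)| + |u z| + 1) / r ^ 2, ?_⟩
    rw [div_mul_cancel₀ _ (by positivity)]; linarith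
  refine ⟨fun x => K * (x - z) ^ 2, by fun_prop, ?_⟩
  obtain ⟨x, hx, hmax⟩ := (isCompact_Icc (a := z - r) (b := z + r)).exists_isMaxOn
    ⟨z, by constructor <;> linarith⟩
    (f := u - fun x => K * (x - z) ^ 2) (by fun_prop)
  have hz := hmax (show z ∈ Icc (z - r) (z + r) by constructor <;> linarith)
  simp only [Pi.sub_apply] at hz
  have a1 := abs_nonneg (u (z - r))
  have a2 := abs_nonneg (u (z + r))
  have a3 := le_abs_self (u (z - r))
  have a4 := le_abs_self (u (z + r))
  have a5 := neg_abs_le (u z)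
  have h1 : z - r < x := by
    rcases hx.1.lt_or_eq with h | h
    · exact h
    · exfalso; rw [← h] at hz; ring_nf at hz; ring_nf at hK; simp only [mem_ofPred_eq] at hz; nlinarith
  have h2 : x < z + r := by
    rcases hx.2.lt_or_eq with h | h
    · exact h
    · exfalso; rw [h] at hz; ring_nf at hz; ring_nf at hK; simp only [mem_ofPred_eq] at hz; nlinarith
  exact ⟨x, abs_lt.2 ⟨by linarith, by linarith⟩, hmax.isLocalMax (Icc_mem_nhds h1 h2)⟩

/-- A continuous function nonnegative at all touching points is nonnegative. -/
lemma nonneg_of_touch {u h : ℝ → ℝ} (hu : Continuous u) (hh : Continuous h)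
    (H : ∀ φ : ℝ → ℝ, ContDiff ℝ 1 φ → ∀ x, IsLocalMax (u - φ) x → 0 ≤ h x) (z : ℝ) :
    0 ≤ h z := by
  by_contra hneg
  push Not at hneg
  have : ∀ᶠ x in 𝓝 z, h x < 0 := hh.continuousAt.eventually_lt continuousAt_const hneg
  obtain ⟨r, hr, hball⟩ := Metric.eventually_nhds_iff.1 this
  obtain ⟨φ, hφ, x, hx, hm⟩ := touch_dense hu z r hr
  have h1 := hball (y := x) (by rwa [Real.dist_eq])
  have h2 := H φ hφ x hm
  linarith

/-- Upper slope bound from test functions. -/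
lemma slope_upper {U : ℝ → ℝ} (hU : Continuous U) {α β B : ℝ}
    (H : ∀ φ : ℝ → ℝ, ContDiff ℝ 1 φ → ∀ x, x ∈ Ioo α β → IsLocalMax (U - φ) x →
      deriv φ x ≤ B) {x y : ℝ} (hx : α ≤ x) (hxy : x < y) (hy : y ≤ β) :
    U y - U x ≤ B * (y - x) := by
  by_contra hcon
  push Not at hcon
  obtain ⟨B', hB1, hB2⟩ : ∃ B', B < B' ∧ B' * (y - x) < U y - U x := by
    obtain ⟨B', h1, h2⟩ := exists_between (show B < (U y - U x) / (y - x) by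
      rw [lt_div_iff₀ (by linarith)]; exact hcon)
    exact ⟨B', h1, by rwa [lt_div_iff₀ (by linarith)] at h2⟩
  -- `W = U - B' x`
  have hW : ∀ᶠ z in 𝓝 y, U x - B' * x < U z - B' * z := by
    apply ContinuousAt.eventually_lt continuousAt_const (by fun_prop)
    linarith
  obtain ⟨r, hr, hball⟩ := Metric.eventually_nhds_iff.1 hW
  set d := min (r / 2) ((y - x) / 2) with hd
  have hd0 : 0 < d := lt_min (by linarith) (by linarith)
  have hd1 : d ≤ r / 2 := min_le_left _ _
  have hd2 : d ≤ (y - x) / 2 := min_le_right _ _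
  have hy' := hball (y := y - d) (by rw [Real.dist_eq, abs_lt]; constructor <;> linarith)
  set gap := (U (y - d) - B' * (y - d)) - (U x - B' * x) with hgap
  have hgap0 : 0 < gap := by linarith
  set lam := |U y - B' * y - (U x - B' * x)| + 1 with hlam
  have hlam0 : 0 < lam := by positivity
  have hlim : Tendsto (fun K : ℝ => lam * Real.exp (-(K * d))) atTop (𝓝 (lam * 0)) := by
    apply Tendsto.const_mul
    exact Real.tendsto_exp_neg_atTop_nhds_zero.comp (tendsto_id.atTop_mul_const hd0)
  rw [mul_zero] at hlim
  obtain ⟨K, hK, hK0⟩ := ((hlim.eventually (gt_mem_nhds hgap0)).and (eventually_gt_atTop 0)).exists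
  set φ : ℝ → ℝ := fun z => B' * z + lam * Real.exp (K * (z - y)) with hφ
  have hφc : ContDiff ℝ 1 φ := by fun_prop
  obtain ⟨m, hm, hmax⟩ := (isCompact_Icc (a := x) (b := y)).exists_isMaxOn
    ⟨x, by constructor <;> linarith⟩ (f := U - φ) (by fun_prop)
  have h1 := hmax (show y - d ∈ Icc x y by constructor <;> linarith)
  simp only [Pi.sub_apply, hφ, mem_ofPred_eq] at h1
  rw [show K * (y - d - y) = -(K * d) by ring] at h1
  have hmx : x < m := by
    rcases hm.1.lt_or_eq with h | h
    · exact h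
    · exfalso; rw [← h] at h1
      have := mul_pos hlam0 (Real.exp_pos (K * (x - y)))
      linarith
  have hmy : m < y := by
    rcases hm.2.lt_or_eq with h | h
    · exact h
    · exfalso; rw [h] at h1
      simp only [sub_self, mul_zero, Real.exp_zero, mul_one] at h1
      have := le_abs_self (U y - B' * y - (U x - B' * x))
      linarith
  have h2 := H φ hφc m ⟨by linarith, by linarith⟩ (hmax.isLocalMax (Icc_mem_nhds hmx hmy))
  have h3 : HasDerivAt φ (B' * 1 + lam * (Real.exp (K * (m - y)) * (K * 1))) m :=
    ((hasDerivAt_id m).const_mul B').add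
      (((((hasDerivAt_id m).sub_const y).const_mul K).exp).const_mul lam)
  rw [h3.deriv] at h2
  have := mul_pos hlam0 (mul_pos (Real.exp_pos (K * (m - y))) hK0)
  nlinarith

lemma isLocalMax_comp_neg {W : ℝ → ℝ} {x : ℝ} (h : IsLocalMax (fun z => W (-z)) x) :
    IsLocalMax W (-x) := by
  have : Tendsto (fun z : ℝ => -z) (𝓝 (-x)) (𝓝 x) := by
    simpa using (continuous_neg (G := ℝ)).tendsto (-x)
  have h2 := this.eventually h
  filter_upwards [h2] with z hz
  simpa using hz

/-- Lower slope bound from test functions. -/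
lemma slope_lower {U : ℝ → ℝ} (hU : Continuous U) {α β A : ℝ}
    (H : ∀ φ : ℝ → ℝ, ContDiff ℝ 1 φ → ∀ x, x ∈ Ioo α β → IsLocalMax (U - φ) x →
      A ≤ deriv φ x) {x y : ℝ} (hx : α ≤ x) (hxy : x < y) (hy : y ≤ β) :
    A * (y - x) ≤ U y - U x := by
  have := slope_upper (U := fun z => U (-z)) (by fun_prop) (α := -β) (β := -α) (B := -A)
    (by
      intro φ hφ z hz hm
      have hm' : IsLocalMax (U - fun z => φ (-z)) (-z) := by
        apply isLocalMax_comp_neg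
        simpa [Pi.sub_def] using hm
      have := H (fun z => φ (-z)) (by fun_prop) (-z) ⟨by linarith [hz.2], by linarith [hz.1]⟩ hm'
      rw [deriv_comp_neg] at this
      simp only [neg_neg] at this
      linarith) (x := -y) (y := -x) (by linarith) (by linarith) (by linarith)
  simp only [neg_neg] at this
  linarith

/-- Local slope bounds. -/
def SlopeIn (U : ℝ → ℝ) (a b x₀ : ℝ) : Prop :=
  ∀ η : ℝ, 0 < η → ∃ r : ℝ, 0 < r ∧ ∀ x y : ℝ, x₀ - r ≤ x → x < y → y ≤ x₀ + r →
    (a - η) * (y - x) ≤ U y - U x ∧ U y - U x ≤ (b + η) * (y - x)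

lemma slopeIn_of_test {U A B : ℝ → ℝ} (hU : Continuous U) (hA : Continuous A) (hB : Continuous B)
    (H : ∀ φ : ℝ → ℝ, ContDiff ℝ 1 φ → ∀ x, IsLocalMax (U - φ) x →
      A x ≤ deriv φ x ∧ deriv φ x ≤ B x) (x₀ : ℝ) : SlopeIn U (A x₀) (B x₀) x₀ := by
  intro η hη
  have h1 : ∀ᶠ x in 𝓝 x₀, A x₀ - η < A x :=
    continuousAt_const.eventually_lt hA.continuousAt (by linarith)
  have h2 : ∀ᶠ x in 𝓝 x₀, B x < B x₀ + η :=
    hB.continuousAt.eventually_lt continuousAt_const (by linarith)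
  obtain ⟨r, hr, hball⟩ := Metric.eventually_nhds_iff.1 (h1.and h2)
  refine ⟨r, hr, fun x y hx hxy hy => ⟨?_, ?_⟩⟩
  · refine slope_lower hU (α := x₀ - r) (β := x₀ + r) ?_ hx hxy hy
    intro φ hφ z hz hm
    have := hball (y := z) (by rw [Real.dist_eq, abs_lt]; constructor <;> linarith [hz.1, hz.2])
    linarith [this.1, (H φ hφ z hm).1]
  · refine slope_upper hU (α := x₀ - r) (β := x₀ + r) ?_ hx hxy hy
    intro φ hφ z hz hm
    have := hball (y := z) (by rw [Real.dist_eq, abs_lt]; constructor <;> linarith [hz.1, hz.2])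
    linarith [this.2, (H φ hφ z hm).2]

lemma SlopeIn.comb {U W : ℝ → ℝ} {a b a' b' x₀ θ : ℝ} (h0 : 0 ≤ θ) (h1 : θ ≤ 1) (k : ℝ)
    (hU : SlopeIn U a b x₀) (hW : SlopeIn W a' b' x₀) :
    SlopeIn (fun x => θ * U x + (1 - θ) * W x + k) (θ * a + (1 - θ) * a')
      (θ * b + (1 - θ) * b') x₀ := by
  intro η hη
  obtain ⟨r, hr, h⟩ := hU η hη
  obtain ⟨r', hr', h'⟩ := hW η hη
  refine ⟨min r r', lt_min hr hr', fun x y hx hxy hy => ?_⟩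
  have m1 := min_le_left r r'
  have m2 := min_le_right r r'
  have e := h x y (by linarith) hxy (by linarith)
  have e' := h' x y (by linarith) hxy (by linarith)
  have h1' : 0 ≤ 1 - θ := by linarith
  have q1 := mul_le_mul_of_nonneg_left e.1 h0
  have q2 := mul_le_mul_of_nonneg_left e.2 h0
  have q3 := mul_le_mul_of_nonneg_left e'.1 h1'
  have q4 := mul_le_mul_of_nonneg_left e'.2 h1'
  constructor <;> nlinarith

lemma SlopeIn.test {U : ℝ → ℝ} {a b x₀ : ℝ} (hU : SlopeIn U a b x₀) {φ : ℝ → ℝ}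
    (hφ : ContDiff ℝ 1 φ) (hm : IsLocalMax (U - φ) x₀) : a ≤ deriv φ x₀ ∧ deriv φ x₀ ≤ b := by
  have hd : HasDerivAt φ (deriv φ x₀) x₀ :=
    (hφ.differentiable (by norm_num)).differentiableAt.hasDerivAt
  have hs := hasDerivAt_iff_tendsto_slope.1 hd
  have hsr : Tendsto (slope φ x₀) (𝓝[>] x₀) (𝓝 (deriv φ x₀)) :=
    hs.mono_left (nhdsWithin_mono _ fun x hx => ne_of_gt hx)
  have hsl : Tendsto (slope φ x₀) (𝓝[<] x₀) (𝓝 (deriv φ x₀)) :=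
    hs.mono_left (nhdsWithin_mono _ fun x hx => ne_of_lt hx)
  constructor
  · refine le_of_forall_pos_le_add fun η hη => ?_
    obtain ⟨r, hr, h⟩ := hU η hη
    have : a - η ≤ deriv φ x₀ := by
      refine ge_of_tendsto hsr ?_
      have h2 : ∀ᶠ x in 𝓝[>] x₀, x ≤ x₀ + r :=
        mem_nhdsWithin_of_mem_nhds (Iic_mem_nhds (by linarith))
      filter_upwards [mem_nhdsWithin_of_mem_nhds hm, h2, self_mem_nhdsWithin] with x h1 h2 h3
      have h3 : x₀ < x := h3
      have h4 := (h x₀ x (by linarith) h3 h2).1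
      simp only [Pi.sub_apply] at h1
      rw [slope_def_field, le_div_iff₀ (by linarith)]
      linarith
    linarith
  · refine le_of_forall_pos_le_add fun η hη => ?_
    obtain ⟨r, hr, h⟩ := hU η hη
    refine le_of_tendsto hsl ?_
    have h2 : ∀ᶠ x in 𝓝[<] x₀, x₀ - r ≤ x :=
      mem_nhdsWithin_of_mem_nhds (Ici_mem_nhds (by linarith))
    filter_upwards [mem_nhdsWithin_of_mem_nhds hm, h2, self_mem_nhdsWithin] with x h1 h2 h3
    have h3 : x < x₀ := h3
    have h4 := (h x x₀ h2 h3 (by linarith)).2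
    simp only [Pi.sub_apply] at h1
    rw [slope_def_field, div_le_iff_of_neg (by linarith)]
    linarith

/-- Monotonicity from absence of local maxima. -/
lemma mono_of_no_max {W : ℝ → ℝ} (hW : Continuous W) {d : ℝ} (hd : ∀ x, W (x + 1) = W x + d)
    (H : ∀ x, ¬ IsLocalMax W x) (hd0 : 0 ≤ d) : ∀ x y, x < y → W x < W y := by
  intro x y hxy
  by_contra hcon
  push Not at hcon
  obtain ⟨m, hm, hmax⟩ := (isCompact_Icc (a := x - 1) (b := y)).exists_isMaxOn
    ⟨x, by constructor <;> linarith⟩ (f := W) hW.continuousOn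
  have h1 : W (x - 1) ≤ W x := by have := hd (x - 1); rw [sub_add_cancel] at this; linarith
  have hxm := hmax (show x ∈ Icc (x - 1) y by constructor <;> linarith)
  simp only [mem_ofPred_eq] at hxm
  by_cases hin : x - 1 < m ∧ m < y
  · exact H m (hmax.isLocalMax (Icc_mem_nhds hin.1 hin.2))
  · have hWm : W m ≤ W x := by
      rcases hm.1.lt_or_eq with h | h
      · rcases hm.2.lt_or_eq with h' | h'
        · exact absurd ⟨h, h'⟩ hin
        · rw [h']; exact hcon
      · rw [← h]; exact h1
    refine H x (IsMaxOn.isLocalMax (s := Icc (x - 1) y) (fun z hz => ?_)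
      (Icc_mem_nhds (by linarith) hxy))
    exact le_trans (hmax hz) hWm

lemma anti_of_no_max {W : ℝ → ℝ} (hW : Continuous W) {d : ℝ} (hd : ∀ x, W (x + 1) = W x + d)
    (H : ∀ x, ¬ IsLocalMax W x) (hd0 : d ≤ 0) : ∀ x y, x < y → W y < W x := by
  intro x y hxy
  have := mono_of_no_max (W := fun z => W (-z)) (by fun_prop) (d := -d)
    (by intro z; have := hd (-(z + 1)); rw [show -(z + 1) + 1 = -z by ring] at this; linarith)
    (fun z hz => H _ (isLocalMax_comp_neg hz)) (by linarith) (-y) (-x) (by linarith)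
  simpa using this

/-- Test slopes of an increasing function. -/
lemma test_ge_of_mono {u φ : ℝ → ℝ} {k x₀ : ℝ} (hφ : ContDiff ℝ 1 φ)
    (hmono : ∀ x y, x < y → k * x + u x < k * y + u y)
    (hm : IsLocalMax (u - φ) x₀) : -k ≤ deriv φ x₀ := by
  have hd : HasDerivAt φ (deriv φ x₀) x₀ :=
    (hφ.differentiable (by norm_num)).differentiableAt.hasDerivAt
  have hsr : Tendsto (slope φ x₀) (𝓝[>] x₀) (𝓝 (deriv φ x₀)) :=
    (hasDerivAt_iff_tendsto_slope.1 hd).mono_left (nhdsWithin_mono _ fun x hx => ne_of_gt hx)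
  refine ge_of_tendsto hsr ?_
  filter_upwards [mem_nhdsWithin_of_mem_nhds hm, self_mem_nhdsWithin] with x h1 h3
  have h3 : x₀ < x := h3
  simp only [Pi.sub_apply] at h1
  have := hmono x₀ x h3
  rw [slope_def_field, le_div_iff₀ (by linarith)]
  linarith

lemma test_le_of_anti {u φ : ℝ → ℝ} {k x₀ : ℝ} (hφ : ContDiff ℝ 1 φ)
    (hmono : ∀ x y, x < y → k * y + u y < k * x + u x)
    (hm : IsLocalMax (u - φ) x₀) : deriv φ x₀ ≤ -k := by
  have hd : HasDerivAt φ (deriv φ x₀) x₀ :=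
    (hφ.differentiable (by norm_num)).differentiableAt.hasDerivAt
  have hsl : Tendsto (slope φ x₀) (𝓝[<] x₀) (𝓝 (deriv φ x₀)) :=
    (hasDerivAt_iff_tendsto_slope.1 hd).mono_left (nhdsWithin_mono _ fun x hx => ne_of_lt hx)
  -- use points to the right: slope at most `-k` on the right
  have hsr : Tendsto (slope φ x₀) (𝓝[<] x₀) (𝓝 (deriv φ x₀)) := hsl
  refine le_of_tendsto hsr ?_
  filter_upwards [mem_nhdsWithin_of_mem_nhds hm, self_mem_nhdsWithin] with x h1 h3
  have h3 : x < x₀ := h3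
  simp only [Pi.sub_apply] at h1
  have := hmono x x₀ h3
  rw [slope_def_field, div_le_iff_of_neg (by linarith)]
  linarith

lemma visc_neg {E : ℝ → ℝ → ℝ → ℝ} {u : ℝ → ℝ} (h : ViscSuper1 E u) :
    ViscSub1 (fun x r p => - E x (-r) (-p)) (-u) := by
  intro φ hφ x₀ hm
  have hm' : IsLocalMin (u - (-φ)) x₀ := by
    filter_upwards [hm] with z hz
    simp only [Pi.sub_apply, Pi.neg_apply] at hz ⊢
    linarith
  have := h (-φ) hφ.neg x₀ hm'
  rw [deriv.neg] at this
  simpa using this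

lemma visc_neg' {E : ℝ → ℝ → ℝ → ℝ} {u : ℝ → ℝ} (h : ViscSub1 E u) :
    ViscSuper1 (fun x r p => - E x (-r) (-p)) (-u) := by
  intro φ hφ x₀ hm
  have hm' : IsLocalMax (u - (-φ)) x₀ := by
    filter_upwards [hm] with z hz
    simp only [Pi.sub_apply, Pi.neg_apply] at hz ⊢
    linarith
  have := h (-φ) hφ.neg x₀ hm'
  rw [deriv.neg] at this
  simpa using this

/-- Stability of subsolutions. -/
lemma stability {G V : ℝ → ℝ} (hG : Continuous G) (hV : Continuous V) {c : ℝ} {u : ℝ → ℝ → ℝ}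
    {v : ℝ → ℝ} (hvc : Continuous v) (hvp : Function.Periodic v 1)
    (hu : ∀ ε : ℝ, 0 < ε → Continuous (u ε) ∧
      ViscSub1 (fun x r p => ε * r + G p - V x) (u ε))
    (hlim : TendstoUniformly (fun ε x => u ε x + c / ε) v (𝓝[>] (0 : ℝ))) :
    ViscSub1 (fun x _ p => G p - V x - c) v := by
  intro φ hφ x₀ hm
  by_contra hcon
  push Not at hcon
  obtain ⟨B, hB0, hB⟩ := per_bdd hvc hvp
  have hφ' : Continuous (deriv φ) := hφ.continuous_deriv le_rfl
  have hφc : Continuous φ := hφ.continuous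
  set Ψ : ℝ → ℝ := fun x => G (deriv φ x + 2 * (x - x₀)) - V x - c with hΨ
  have hΨc : Continuous Ψ := by fun_prop
  have hΨ0 : 0 < Ψ x₀ := by simpa [hΨ] using hcon
  set κ := Ψ x₀ / 2 with hκ
  have hκ0 : 0 < κ := by positivity
  have e1 : ∀ᶠ x in 𝓝 x₀, κ < Ψ x :=
    continuousAt_const.eventually_lt hΨc.continuousAt (by rw [hκ]; linarith)
  obtain ⟨r', hr', hball⟩ := Metric.eventually_nhds_iff.1 (e1.and hm)
  set r := r' / 2 with hr
  have hr0 : 0 < r := by positivity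
  have hloc : ∀ x, x ∈ Icc (x₀ - r) (x₀ + r) → κ < Ψ x ∧ v x - φ x ≤ v x₀ - φ x₀ := by
    intro x hx
    have := hball (y := x) (by rw [Real.dist_eq, abs_lt]; constructor <;> linarith [hx.1, hx.2])
    simpa using this
  have e2 := Metric.tendstoUniformly_iff.1 hlim (r ^ 2 / 4) (by positivity)
  have e3 : ∀ᶠ ε in 𝓝[>] (0 : ℝ), ε < κ / (B + r ^ 2 / 4 + 1) :=
    mem_nhdsWithin_of_mem_nhds (Iio_mem_nhds (by positivity))
  obtain ⟨ε, ⟨he2, he3⟩, hε⟩ := ((e2.and e3).and self_mem_nhdsWithin).exists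
  have hε : 0 < ε := hε
  obtain ⟨huc, hus⟩ := hu ε hε
  set ψ : ℝ → ℝ := fun x => φ x + (x - x₀) ^ 2 with hψ
  have hψc : ContDiff ℝ 1 ψ := by fun_prop
  obtain ⟨m, hmI, hmax⟩ := (isCompact_Icc (a := x₀ - r) (b := x₀ + r)).exists_isMaxOn
    ⟨x₀, by constructor <;> linarith⟩ (f := u ε - ψ) (by fun_prop)
  have h0 := hmax (show x₀ ∈ Icc (x₀ - r) (x₀ + r) by constructor <;> linarith)
  simp only [Pi.sub_apply, hψ, mem_ofPred_eq] at h0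
  have b0 := abs_lt.1 (he2 x₀)
  have bm := abs_lt.1 (he2 m)
  have hlm := hloc m hmI
  have hsq : (m - x₀) ^ 2 < r ^ 2 := by nlinarith
  have habs := abs_lt.1 (abs_lt_of_sq_lt_sq hsq hr0.le)
  have hloc' : IsLocalMax (u ε - ψ) m :=
    hmax.isLocalMax (Icc_mem_nhds (by linarith) (by linarith))
  have h2 := hus ψ hψc m hloc'
  have hd : HasDerivAt ψ (deriv φ m + ((2 : ℕ) * (m - x₀) ^ (2 - 1) * 1)) m :=
    ((hφ.differentiable (by norm_num)).differentiableAt.hasDerivAt (x := m)).add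
      (((hasDerivAt_id m).sub_const x₀).pow 2)
  rw [hd.deriv] at h2
  have e4 : deriv φ m + ((2 : ℕ) * (m - x₀) ^ (2 - 1) * 1) = deriv φ m + 2 * (m - x₀) := by
    push_cast; ring
  rw [e4] at h2
  have h3 := hlm.1
  simp only [hΨ] at h3
  have hc : ε * (c / ε) = c := by field_simp
  have hBm := abs_le.1 (hB m)
  rw [lt_div_iff₀ (by positivity)] at he3
  nlinarith [mul_pos hε hr0]

/-- Compactness and uniqueness of cluster points. -/
lemma compact_conv {w : ℝ → ℝ → ℝ} {εs M L : ℝ} (hεs : 0 < εs)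
    (hc : ∀ ε, 0 < ε → ε < εs → Continuous (w ε)) 
    (hp : ∀ ε, 0 < ε → ε < εs → Function.Periodic (w ε) 1)
    (hM : ∀ ε, 0 < ε → ε < εs → ∀ x, |w ε x| ≤ M)
    (hL : ∀ ε, 0 < ε → ε < εs → ∀ x y, |w ε x - w ε y| ≤ L * |x - y|)
    (hcomb : ∀ η : ℝ, 0 < η → ∃ ε1 : ℝ, 0 < ε1 ∧ ∀ δ ε ε0 : ℝ, 0 < δ → δ < ε → ε < ε0 → ε0 < ε1 →
      (∀ x, |w δ x - w ε0 x| ≤ η) → ∀ x, w ε0 x - 3 * η ≤ w ε x) :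
    ∃ v : ℝ → ℝ, Continuous v ∧ Function.Periodic v 1 ∧
      TendstoUniformly w v (𝓝[>] (0 : ℝ)) := by
  classical
  let I := Icc (0 : ℝ) 1
  let f : ℝ → BoundedContinuousFunction I ℝ := fun ε =>
    if h : Continuous (w ε) then
      BoundedContinuousFunction.mkOfCompact ⟨fun x : I => w ε x, h.comp continuous_subtype_val⟩
    else 0
  have hf : ∀ ε, 0 < ε → ε < εs → ∀ x : I, f ε x = w ε x := by
    intro ε h1 h2 x
    simp only [f, dif_pos (hc ε h1 h2)]
    rfl
  let A : Set (BoundedContinuousFunction I ℝ) :=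
    {g | (∀ x, g x ∈ Icc (-M) M) ∧ ∀ x y, dist (g x) (g y) ≤ L * dist x y}
  have hAc : IsClosed A := by
    have : A = (⋂ x, {g | g x ∈ Icc (-M) M}) ∩
        ⋂ x, ⋂ y, {g | dist (g x) (g y) ≤ L * dist x y} := by
      ext g; simp [A]
    rw [this]
    refine IsClosed.inter (isClosed_iInter fun x => ?_)
      (isClosed_iInter fun x => isClosed_iInter fun y => ?_)
    · exact isClosed_Icc.preimage (continuous_eval_const x)
    · exact isClosed_le ((continuous_eval_const x).dist
        (continuous_eval_const y)) continuous_const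
  have hA : IsCompact A := by
    refine BoundedContinuousFunction.arzela_ascoli₂ (Icc (-M) M) isCompact_Icc A hAc
      (fun g x hg => hg.1 x) ?_
    refine Metric.equicontinuous_of_continuity_modulus (fun t => L * t) ?_ _ ?_
    · have : Tendsto (fun t : ℝ => L * t) (𝓝 0) (𝓝 (L * 0)) := tendsto_id.const_mul L
      simpa using this
    · intro x y g; exact g.2.2 x y
  have hsmall : ∀ᶠ ε in 𝓝[>] (0 : ℝ), 0 < ε ∧ ε < εs := by
    filter_upwards [self_mem_nhdsWithin, mem_nhdsWithin_of_mem_nhds (Iio_mem_nhds hεs)]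
      with ε h1 h2
    exact ⟨h1, h2⟩
  have hfA : ∀ᶠ ε in 𝓝[>] (0 : ℝ), f ε ∈ A := by
    filter_upwards [hsmall] with ε h
    refine ⟨fun x => ?_, fun x y => ?_⟩
    · rw [hf ε h.1 h.2]; exact abs_le.1 (hM ε h.1 h.2 x)
    · rw [hf ε h.1 h.2, hf ε h.1 h.2]; exact hL ε h.1 h.2 x y
  have key : ∀ g1 g2, MapClusterPt g1 (𝓝[>] (0 : ℝ)) f → MapClusterPt g2 (𝓝[>] (0 : ℝ)) f →
      ∀ x, g1 x ≤ g2 x := by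
    intro g1 g2 h1 h2 x
    refine le_of_forall_pos_le_add fun κ hκ => ?_
    set η := κ / 10 with hη
    have hη0 : 0 < η := by positivity
    obtain ⟨ε1, hε1, hC⟩ := hcomb η hη0
    have near : ∀ g, MapClusterPt g (𝓝[>] (0 : ℝ)) f → ∀ ε', 0 < ε' →
        ∃ ε, 0 < ε ∧ ε < ε' ∧ ε < εs ∧ ∀ x : I, |w ε x - g x| ≤ η / 2 := by
      intro g hg ε' hε'
      have hfr := hg.frequently (Metric.ball_mem_nhds g (half_pos hη0))
      have hev : ∀ᶠ ε in 𝓝[>] (0 : ℝ), ε < ε' :=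
        mem_nhdsWithin_of_mem_nhds (Iio_mem_nhds hε')
      obtain ⟨ε, hd, he', he⟩ := (hfr.and_eventually (hev.and hsmall)).exists
      refine ⟨ε, he.1, he', he.2, fun x => ?_⟩
      rw [← hf ε he.1 he.2, ← Real.dist_eq]
      exact (BoundedContinuousFunction.dist_coe_le_dist x).trans (le_of_lt hd)
    obtain ⟨ε0, a1, a2, a3, a4⟩ := near g1 h1 ε1 hε1
    obtain ⟨ε, b1, b2, b3, b4⟩ := near g2 h2 ε0 a1
    obtain ⟨δ, c1, c2, c3, c4⟩ := near g1 h1 ε b1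
    have hfr : ∀ ε, 0 < ε → ε < εs → ∀ x, w ε (Int.fract x) = w ε x := by
      intro ε p q x
      have := (hp ε p q).sub_int_mul_eq (x := x) ⌊x⌋
      rw [mul_one] at this; exact this
    have := hC δ ε ε0 c1 c2 b2 a2 (fun z => by
      rw [← hfr δ c1 c3 z, ← hfr ε0 a1 a3 z]
      have hz : Int.fract z ∈ I := ⟨Int.fract_nonneg z, (Int.fract_lt_one z).le⟩
      have p := abs_le.1 (a4 ⟨_, hz⟩)
      have q := abs_le.1 (c4 ⟨_, hz⟩)
      simp only at p q
      exact abs_le.2 ⟨by linarith, by linarith⟩) x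
    have p := abs_le.1 (a4 x)
    have q := abs_le.1 (b4 x)
    linarith
  obtain ⟨g, hgA, hg⟩ := hA.exists_mapClusterPt_of_frequently hfA.frequently
  have hT : Tendsto f (𝓝[>] (0 : ℝ)) (𝓝 g) := by
    refine hA.tendsto_nhds_of_unique_mapClusterPt hfA fun g' _ hg' => ?_
    ext x
    exact le_antisymm (key _ _ hg' hg x) (key _ _ hg hg' x)
  have hU : TendstoUniformly w
      (fun x => g ⟨Int.fract x, Int.fract_nonneg x, (Int.fract_lt_one x).le⟩) (𝓝[>] (0 : ℝ)) := by
    rw [Metric.tendstoUniformly_iff]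
    intro κ hκ
    filter_upwards [hsmall, hT (Metric.ball_mem_nhds g hκ)] with ε h1 h2 x
    have e : w ε (Int.fract x) = w ε x := by
      have := (hp ε h1.1 h1.2).sub_int_mul_eq (x := x) ⌊x⌋
      rw [mul_one] at this; exact this
    rw [← e, dist_comm]
    rw [← hf ε h1.1 h1.2 ⟨Int.fract x, Int.fract_nonneg x, (Int.fract_lt_one x).le⟩]
    exact (BoundedContinuousFunction.dist_coe_le_dist _).trans_lt h2
  refine ⟨_, hU.continuous ?_, fun x => ?_, hU⟩
  · exact (hsmall.mono fun ε h => hc ε h.1 h.2).frequently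
  · simp only [Int.fract_add_one]

lemma core_arith {δ ε ε0 θ A B c C M η Vz g : ℝ} (hδ : 0 < δ) (hε : 0 < ε) (hε0 : 0 < ε0)
    (hδε0 : δ < ε0) (hC : 0 ≤ C) (hη : 0 < η) (hθ0 : 0 ≤ θ) (hθ1 : θ ≤ 1)
    (hθ : ε = θ * ε0 + (1 - θ) * δ) (hAM : |A| ≤ M) (hBM : |B| ≤ M) (hAB : |B - A| ≤ η)
    (hε0η : ε0 * (4 * C * M ^ 2 + 1) < η)
    (hq : g ≤ θ * (Vz - (ε0 * A - c)) + (1 - θ) * (Vz - (δ * B - c))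
      + C * θ * ((Vz - (ε0 * A - c)) - (Vz - (δ * B - c))) ^ 2) :
    ε * (θ * A + (1 - θ) * B) - c - 2 * (ε * η) + g - Vz ≤ 0 := by
  have hM0 : 0 ≤ M := (abs_nonneg _).trans hAM
  have hX : (Vz - (ε0 * A - c)) - (Vz - (δ * B - c)) = δ * B - ε0 * A := by ring
  rw [hX] at hq
  have hdiff : |δ * B - ε0 * A| ≤ 2 * M * ε0 := by
    have t1 : |δ * B| ≤ ε0 * M := by
      rw [abs_mul, abs_of_pos hδ]; gcongr
    have t2 : |ε0 * A| ≤ ε0 * M := by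
      rw [abs_mul, abs_of_pos hε0]; gcongr
    have := abs_sub (δ * B) (ε0 * A)
    linarith
  have hsq : (δ * B - ε0 * A) ^ 2 ≤ (2 * M * ε0) ^ 2 := by
    rw [← sq_abs]; exact pow_le_pow_left₀ (abs_nonneg _) hdiff 2
  have hθε : θ * ε0 ≤ ε := by
    have := mul_nonneg (sub_nonneg.2 hθ1) hδ.le
    linarith
  have herr : C * θ * (δ * B - ε0 * A) ^ 2 ≤ ε * η := by
    calc _ ≤ C * θ * (2 * M * ε0) ^ 2 := by gcongr
      _ = (θ * ε0) * (4 * C * M ^ 2 * ε0) := by ring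
      _ ≤ ε * η := by
        apply mul_le_mul hθε _ (by positivity) hε.le
        linarith
  have hcross : θ * (1 - θ) * (ε0 - δ) * (B - A) ≤ ε * η := by
    have t1 : B - A ≤ η := (le_abs_self _).trans hAB
    have t2 : 0 ≤ θ * (1 - θ) * (ε0 - δ) :=
      mul_nonneg (mul_nonneg hθ0 (by linarith)) (by linarith)
    have t3 : θ * (1 - θ) * (ε0 - δ) ≤ ε := by
      have : θ * (1 - θ) * (ε0 - δ) ≤ θ * 1 * ε0 := by
        apply mul_le_mul _ (by linarith) (by linarith) (by linarith)
        exact mul_le_mul_of_nonneg_left (by linarith) hθ0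
      linarith
    calc _ ≤ θ * (1 - θ) * (ε0 - δ) * η := mul_le_mul_of_nonneg_left t1 t2
      _ ≤ ε * η := mul_le_mul_of_nonneg_right t3 hη.le
  have hid : ε * (θ * A + (1 - θ) * B) - θ * (ε0 * A) - (1 - θ) * (δ * B)
      = θ * (1 - θ) * (ε0 - δ) * (B - A) := by rw [hθ]; ring
  generalize C * θ * (δ * B - ε0 * A) ^ 2 = X at *
  generalize θ * (1 - θ) * (ε0 - δ) * (B - A) = Y at *
  have : θ * (Vz - (ε0 * A - c)) + (1 - θ) * (Vz - (δ * B - c))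
    = Vz + c - (θ * (ε0 * A) + (1 - θ) * (δ * B)) := by ring
  linarith

/-- The core convexity estimate. -/
lemma core {G V a b : ℝ → ℝ} {c M C εs : ℝ} {S : Set ℝ} {u : ℝ → ℝ → ℝ}
    (hV : Continuous V) (ha : Continuous a) (hb : Continuous b) (hC : 0 ≤ C) (hεs : 0 < εs)
    (hu : ∀ ε : ℝ, 0 < ε → ε < εs → Continuous (u ε) ∧ Function.Periodic (u ε) 1 ∧
      ViscSol1 (fun x r p => ε * r + G p - V x) (u ε))
    (hM : ∀ ε : ℝ, 0 < ε → ε < εs → ∀ x, |u ε x + c / ε| ≤ M)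
    (hS : ∀ ε : ℝ, 0 < ε → ε < εs → ∀ x, V x - ε * u ε x ∈ S)
    (htest : ∀ ε : ℝ, 0 < ε → ε < εs → ∀ φ : ℝ → ℝ, ContDiff ℝ 1 φ → ∀ x,
      IsLocalMax (u ε - φ) x → a (V x - ε * u ε x) ≤ deriv φ x ∧ deriv φ x ≤ b (V x - ε * u ε x))
    (hQ : ∀ s0 ∈ S, ∀ s1 ∈ S, ∀ θ p : ℝ, 0 ≤ θ → θ ≤ 1 → θ * a s0 + (1 - θ) * a s1 ≤ p →
      p ≤ θ * b s0 + (1 - θ) * b s1 → G p ≤ θ * s0 + (1 - θ) * s1 + C * θ * (s0 - s1) ^ 2) :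
    ∀ η : ℝ, 0 < η → ∃ ε1 : ℝ, 0 < ε1 ∧ ∀ δ ε ε0 : ℝ, 0 < δ → δ < ε → ε < ε0 → ε0 < ε1 →
      (∀ x, |(u δ x + c / δ) - (u ε0 x + c / ε0)| ≤ η) →
      ∀ x, (u ε0 x + c / ε0) - 3 * η ≤ u ε x + c / ε := by
  intro η hη
  refine ⟨min εs (η / (4 * C * M ^ 2 + 1)), lt_min hεs (by positivity), ?_⟩
  intro δ ε ε0 hδ hδε hεε0 hε0 hclose x
  have hε0s : ε0 < εs := hε0.trans_le (min_le_left _ _)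
  have hε0η : ε0 < η / (4 * C * M ^ 2 + 1) := hε0.trans_le (min_le_right _ _)
  rw [lt_div_iff₀ (by positivity)] at hε0η
  have hε : 0 < ε := hδ.trans hδε
  have hε0p : 0 < ε0 := hε.trans hεε0
  have hεs' : ε < εs := hεε0.trans hε0s
  have hδs : δ < εs := hδε.trans hεs'
  obtain ⟨c0, p0, s0⟩ := hu ε0 hε0p hε0s
  obtain ⟨c1, p1, s1⟩ := hu δ hδ hδs
  obtain ⟨ce, pe, se⟩ := hu ε hε hεs'
  obtain ⟨θ, hθ0, hθ1, hθ⟩ : ∃ θ : ℝ, 0 ≤ θ ∧ θ ≤ 1 ∧ ε = θ * ε0 + (1 - θ) * δ := by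
    have hpos : 0 < ε0 - δ := by linarith
    refine ⟨(ε - δ) / (ε0 - δ), div_nonneg (by linarith) hpos.le, ?_, ?_⟩
    · rw [div_le_one hpos]; linarith
    · field_simp; ring
  set k : ℝ := θ * (c / ε0) + (1 - θ) * (c / δ) - c / ε - 2 * η with hk
  set W : ℝ → ℝ := fun x => θ * u ε0 x + (1 - θ) * u δ x + k with hW
  have hWc : Continuous W := by fun_prop
  have hWp : Function.Periodic W 1 := fun z => by simp only [hW, p0 z, p1 z]
  have hsub : ViscSub1 (fun x r p => ε * r + G p - V x) W := by
    intro φ hφ z hz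
    have sl0 := slopeIn_of_test (A := fun x => a (V x - ε0 * u ε0 x))
      (B := fun x => b (V x - ε0 * u ε0 x)) c0 (by fun_prop) (by fun_prop)
      (htest ε0 hε0p hε0s) z
    have sl1 := slopeIn_of_test (A := fun x => a (V x - δ * u δ x))
      (B := fun x => b (V x - δ * u δ x)) c1 (by fun_prop) (by fun_prop)
      (htest δ hδ hδs) z
    have ht := (sl0.comb hθ0 hθ1 k sl1).test hφ hz
    have hq := hQ _ (hS ε0 hε0p hε0s z) _ (hS δ hδ hδs z) θ _ hθ0 hθ1 ht.1 ht.2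
    -- rewrite in terms of the normalized functions
    obtain ⟨A, hA⟩ : ∃ A, A = u ε0 z + c / ε0 := ⟨_, rfl⟩
    obtain ⟨B, hB⟩ : ∃ B, B = u δ z + c / δ := ⟨_, rfl⟩
    have hAM := hM ε0 hε0p hε0s z
    have hBM := hM δ hδ hδs z
    have hAB := hclose z
    rw [← hA] at hAM hAB
    rw [← hB] at hBM hAB
    have eA : ε0 * u ε0 z = ε0 * A - c := by rw [hA]; field_simp; ring
    have eB : δ * u δ z = δ * B - c := by rw [hB]; field_simp; ring
    have eW : ε * W z = ε * (θ * A + (1 - θ) * B) - c - 2 * (ε * η) := by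
      simp only [hW, hk, hA, hB]; field_simp; ring
    rw [eA, eB] at hq
    show ε * W z + G (deriv φ z) - V z ≤ 0
    rw [eW]
    exact core_arith hδ hε hε0p (by linarith) hC hη hθ0 hθ1 hθ hAM hBM hAB hε0η hq
  have hcomp := comparison hε hV hWc hWp ce pe hsub se.2 x
  simp only [hW, hk] at hcomp
  have h3 := mul_le_mul_of_nonneg_left (abs_le.1 (hclose x)).1 (sub_nonneg.2 hθ1)
  have h4 : (1 - θ) * η ≤ 1 * η := mul_le_mul_of_nonneg_right (by linarith) hη.le
  linarith

/-- inner root -/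
def gg (s : ℝ) : ℝ := √(1 - √s)
/-- outer root -/
def ff (s : ℝ) : ℝ := √(1 + √s)

lemma gg_cont : Continuous gg := by unfold gg; fun_prop
lemma ff_cont : Continuous ff := by unfold ff; fun_prop
lemma gg_nonneg (s : ℝ) : 0 ≤ gg s := Real.sqrt_nonneg _
lemma ff_nonneg (s : ℝ) : 0 ≤ ff s := Real.sqrt_nonneg _
lemma gg_le_one (s : ℝ) : gg s ≤ 1 := by
  unfold gg; exact Real.sqrt_le_iff.2 ⟨by norm_num, by linarith [Real.sqrt_nonneg s]⟩
lemma one_le_ff (s : ℝ) : 1 ≤ ff s := by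
  unfold ff; rw [Real.one_le_sqrt]; linarith [Real.sqrt_nonneg s]
lemma gg_sq {s : ℝ} (h1 : s ≤ 1) : gg s ^ 2 = 1 - √s := by
  unfold gg; rw [Real.sq_sqrt]; have : √s ≤ 1 := Real.sqrt_le_iff.2 ⟨by norm_num, by linarith⟩; linarith
lemma ff_sq (s : ℝ) : ff s ^ 2 = 1 + √s := by
  unfold ff; rw [Real.sq_sqrt]; linarith [Real.sqrt_nonneg s]
lemma F_gg {s : ℝ} (h0 : 0 ≤ s) (h1 : s ≤ 1) : (gg s ^ 2 - 1) ^ 2 = s := by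
  rw [gg_sq h1]; have := Real.sq_sqrt h0; linarith [this, show (1 - √s - 1) ^ 2 = √s ^ 2 by ring]
lemma F_ff {s : ℝ} (h0 : 0 ≤ s) : (ff s ^ 2 - 1) ^ 2 = s := by
  rw [ff_sq]; have := Real.sq_sqrt h0; linarith [this, show (1 + √s - 1) ^ 2 = √s ^ 2 by ring]

lemma F_identity (θ q0 q1 : ℝ) :
    ((θ * q0 + (1 - θ) * q1) ^ 2 - 1) ^ 2 =
      θ * (q0 ^ 2 - 1) ^ 2 + (1 - θ) * (q1 ^ 2 - 1) ^ 2 - θ * (1 - θ) * (q0 - q1) ^ 2 *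
      (q0 ^ 2 + q1 ^ 2 + (θ * q0 + (1 - θ) * q1) ^ 2 + q0 * q1 + q0 * (θ * q0 + (1 - θ) * q1)
        + q1 * (θ * q0 + (1 - θ) * q1) - 2) := by ring

lemma F_convex {t θ q0 q1 : ℝ} (ht : 0 ≤ t) (ht3 : 1 ≤ 3 * t ^ 2) (h0 : t ≤ q0) (h1 : t ≤ q1)
    (hθ0 : 0 ≤ θ) (hθ1 : θ ≤ 1) :
    ((θ * q0 + (1 - θ) * q1) ^ 2 - 1) ^ 2 ≤
      θ * (q0 ^ 2 - 1) ^ 2 + (1 - θ) * (q1 ^ 2 - 1) ^ 2 := by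
  rw [F_identity]
  have hz : t ≤ θ * q0 + (1 - θ) * q1 := by nlinarith
  set z := θ * q0 + (1 - θ) * q1
  have e : ∀ a b : ℝ, t ≤ a → t ≤ b → t ^ 2 ≤ a * b := fun a b ha hb => by
    rw [pow_two]; exact mul_le_mul ha hb ht (ht.trans ha)
  have hR : 0 ≤ q0 ^ 2 + q1 ^ 2 + z ^ 2 + q0 * q1 + q0 * z + q1 * z - 2 := by
    linarith [e q0 q0 h0 h0, e q1 q1 h1 h1, e z z hz hz, e q0 q1 h0 h1, e q0 z h0 hz, e q1 z h1 hz]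
  have : 0 ≤ θ * (1 - θ) * (q0 - q1) ^ 2 *
      (q0 ^ 2 + q1 ^ 2 + z ^ 2 + q0 * q1 + q0 * z + q1 * z - 2) :=
    mul_nonneg (mul_nonneg (mul_nonneg hθ0 (by linarith)) (sq_nonneg _)) hR
  linarith

lemma F_concave {t θ q0 q1 : ℝ} (ht3 : 3 * t ^ 2 ≤ 1) (h0' : 0 ≤ q0)
    (h1' : 0 ≤ q1) (h0 : q0 ≤ t) (h1 : q1 ≤ t) (hθ0 : 0 ≤ θ) (hθ1 : θ ≤ 1) :
    θ * (q0 ^ 2 - 1) ^ 2 + (1 - θ) * (q1 ^ 2 - 1) ^ 2 ≤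
    ((θ * q0 + (1 - θ) * q1) ^ 2 - 1) ^ 2 := by
  rw [F_identity]
  have hz : θ * q0 + (1 - θ) * q1 ≤ t := by nlinarith
  have hz' : 0 ≤ θ * q0 + (1 - θ) * q1 :=
    add_nonneg (mul_nonneg hθ0 h0') (mul_nonneg (by linarith) h1')
  set z := θ * q0 + (1 - θ) * q1
  have e : ∀ a b : ℝ, 0 ≤ a → 0 ≤ b → a ≤ t → b ≤ t → a * b ≤ t ^ 2 := fun a b ha hb h h' => by
    rw [pow_two]; exact mul_le_mul h h' hb (ha.trans h)
  have hR : 0 ≤ 2 - (q0 ^ 2 + q1 ^ 2 + z ^ 2 + q0 * q1 + q0 * z + q1 * z) := by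
    linarith [e q0 q0 h0' h0' h0 h0, e q1 q1 h1' h1' h1 h1, e z z hz' hz' hz hz,
      e q0 q1 h0' h1' h0 h1, e q0 z h0' hz' h0 hz, e q1 z h1' hz' h1 hz]
  have : 0 ≤ θ * (1 - θ) * (q0 - q1) ^ 2 *
      (2 - (q0 ^ 2 + q1 ^ 2 + z ^ 2 + q0 * q1 + q0 * z + q1 * z)) :=
    mul_nonneg (mul_nonneg (mul_nonneg hθ0 (by linarith)) (sq_nonneg _)) hR
  linarith

lemma F_diff_sq (q0 q1 : ℝ) : ((q0 ^ 2 - 1) ^ 2 - (q1 ^ 2 - 1) ^ 2) ^ 2 =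
    (q0 - q1) ^ 2 * ((q0 + q1) ^ 2 * (2 - q0 ^ 2 - q1 ^ 2) ^ 2) := by ring

lemma sqrt_third : 3 * (√(1 / 3) : ℝ) ^ 2 = 1 := by rw [Real.sq_sqrt (by norm_num)]; norm_num

/-- lower bound case -/
lemma F_semiconvex {m θ q0 q1 : ℝ} (hm : 0 < m) (h0 : m ≤ q0) (h1 : m ≤ q1) (h0' : q0 ≤ 1)
    (h1' : q1 ≤ 1) (hθ0 : 0 ≤ θ) (hθ1 : θ ≤ 1) :
    ((θ * q0 + (1 - θ) * q1) ^ 2 - 1) ^ 2 ≤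
      θ * (q0 ^ 2 - 1) ^ 2 + (1 - θ) * (q1 ^ 2 - 1) ^ 2
        + 9 / (2 * m ^ 2) * θ * ((q0 ^ 2 - 1) ^ 2 - (q1 ^ 2 - 1) ^ 2) ^ 2 := by
  have hpos : 0 ≤ 9 / (2 * m ^ 2) * θ * ((q0 ^ 2 - 1) ^ 2 - (q1 ^ 2 - 1) ^ 2) ^ 2 := by positivity
  set t : ℝ := √(1 / 3) with ht
  have ht3 : 3 * t ^ 2 = 1 := sqrt_third
  have ht0 : 0 ≤ t := Real.sqrt_nonneg _
  by_cases hc : t ≤ q0 ∧ t ≤ q1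
  · have := F_convex ht0 ht3.ge hc.1 hc.2 hθ0 hθ1
    linarith
  · have hgap : 2 / 3 ≤ 2 - q0 ^ 2 - q1 ^ 2 := by
      rw [not_and_or] at hc
      rcases hc with h | h <;> push Not at h <;> nlinarith
    have hlow : (q0 - q1) ^ 2 * (m ^ 2 * (2 / 3) ^ 2) ≤
        ((q0 ^ 2 - 1) ^ 2 - (q1 ^ 2 - 1) ^ 2) ^ 2 := by
      rw [F_diff_sq]
      gcongr
      linarith
    rw [F_identity]
    have hz' : 0 ≤ θ * q0 + (1 - θ) * q1 :=
      add_nonneg (mul_nonneg hθ0 (by linarith)) (mul_nonneg (by linarith) (by linarith))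
    set z := θ * q0 + (1 - θ) * q1
    have hq0 : 0 ≤ q0 := by linarith
    have hq1 : 0 ≤ q1 := by linarith
    have hR : -2 ≤ q0 ^ 2 + q1 ^ 2 + z ^ 2 + q0 * q1 + q0 * z + q1 * z - 2 := by
      have : 0 ≤ q0 ^ 2 + q1 ^ 2 + z ^ 2 + q0 * q1 + q0 * z + q1 * z := by positivity
      linarith
    have hA : 0 ≤ θ * (1 - θ) * (q0 - q1) ^ 2 :=
      mul_nonneg (mul_nonneg hθ0 (by linarith)) (sq_nonneg _)
    have h3 := mul_le_mul_of_nonneg_left hR hA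
    have h4 : θ * (1 - θ) * (q0 - q1) ^ 2 ≤ θ * (q0 - q1) ^ 2 := by
      apply mul_le_mul_of_nonneg_right _ (sq_nonneg _); nlinarith
    have h5 : θ * (q0 - q1) ^ 2 * 2 ≤
        9 / (2 * m ^ 2) * θ * ((q0 ^ 2 - 1) ^ 2 - (q1 ^ 2 - 1) ^ 2) ^ 2 := by
      calc θ * (q0 - q1) ^ 2 * 2
          = 9 / (2 * m ^ 2) * θ * ((q0 - q1) ^ 2 * (m ^ 2 * (2 / 3) ^ 2)) := by
            field_simp; ring
        _ ≤ _ := by gcongr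
    linarith

lemma F_semiconcave {σ θ q0 q1 : ℝ} (hσ : 0 < σ) (h0 : 0 ≤ q0) (h1 : 0 ≤ q1) 
    (h0' : q0 ≤ 1) (h1' : q1 ≤ 1) (hs : σ ≤ (2 - q0 ^ 2 - q1 ^ 2) ^ 2)
    (hθ0 : 0 ≤ θ) (hθ1 : θ ≤ 1) :
      θ * (q0 ^ 2 - 1) ^ 2 + (1 - θ) * (q1 ^ 2 - 1) ^ 2
        - 12 / σ * θ * ((q0 ^ 2 - 1) ^ 2 - (q1 ^ 2 - 1) ^ 2) ^ 2 ≤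
    ((θ * q0 + (1 - θ) * q1) ^ 2 - 1) ^ 2 := by
  have hpos : 0 ≤ 12 / σ * θ * ((q0 ^ 2 - 1) ^ 2 - (q1 ^ 2 - 1) ^ 2) ^ 2 := by positivity
  set t : ℝ := √(1 / 3) with ht
  have ht3 : 3 * t ^ 2 = 1 := sqrt_third
  have ht0 : 0 ≤ t := Real.sqrt_nonneg _
  by_cases hc : q0 ≤ t ∧ q1 ≤ t
  · have := F_concave ht3.le h0 h1 hc.1 hc.2 hθ0 hθ1
    linarith
  · have hgap : 1 / 3 ≤ (q0 + q1) ^ 2 := by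
      rw [not_and_or] at hc
      rcases hc with h | h <;> push Not at h <;> nlinarith
    have hlow : (q0 - q1) ^ 2 * (1 / 3 * σ) ≤
        ((q0 ^ 2 - 1) ^ 2 - (q1 ^ 2 - 1) ^ 2) ^ 2 := by
      rw [F_diff_sq]
      gcongr
    rw [F_identity]
    have hz' : 0 ≤ θ * q0 + (1 - θ) * q1 :=
      add_nonneg (mul_nonneg hθ0 (by linarith)) (mul_nonneg (by linarith) (by linarith))
    have hz1 : θ * q0 + (1 - θ) * q1 ≤ 1 := by nlinarith
    set z := θ * q0 + (1 - θ) * q1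
    have e : ∀ a b : ℝ, 0 ≤ a → 0 ≤ b → a ≤ 1 → b ≤ 1 → a * b ≤ 1 := fun a b ha hb h h' => by
      nlinarith
    have hR : q0 ^ 2 + q1 ^ 2 + z ^ 2 + q0 * q1 + q0 * z + q1 * z - 2 ≤ 4 := by
      linarith [e q0 q0 h0 h0 h0' h0', e q1 q1 h1 h1 h1' h1', e z z hz' hz' hz1 hz1,
        e q0 q1 h0 h1 h0' h1', e q0 z h0 hz' h0' hz1, e q1 z h1 hz' h1' hz1]
    have hA : 0 ≤ θ * (1 - θ) * (q0 - q1) ^ 2 :=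
      mul_nonneg (mul_nonneg hθ0 (by linarith)) (sq_nonneg _)
    have h3 := mul_le_mul_of_nonneg_left hR hA
    have h4 : θ * (1 - θ) * (q0 - q1) ^ 2 ≤ θ * (q0 - q1) ^ 2 := by
      apply mul_le_mul_of_nonneg_right _ (sq_nonneg _); nlinarith
    have h5 : θ * (q0 - q1) ^ 2 * 4 ≤
        12 / σ * θ * ((q0 ^ 2 - 1) ^ 2 - (q1 ^ 2 - 1) ^ 2) ^ 2 := by
      calc θ * (q0 - q1) ^ 2 * 4
          = 12 / σ * θ * ((q0 - q1) ^ 2 * (1 / 3 * σ)) := by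
            field_simp; ring
        _ ≤ _ := by gcongr
    linarith

lemma F_mono_out {q q' : ℝ} (h1 : 1 ≤ q) (h : q ≤ q') : (q ^ 2 - 1) ^ 2 ≤ (q' ^ 2 - 1) ^ 2 := by
  apply pow_le_pow_left₀ <;> nlinarith

lemma F_anti_in {q q' : ℝ} (h0 : 0 ≤ q) (h : |q'| ≤ q) (h1 : q ≤ 1) :
    (q ^ 2 - 1) ^ 2 ≤ (q' ^ 2 - 1) ^ 2 := by
  have h2 : q' ^ 2 ≤ q ^ 2 := sq_le_sq' (by linarith [(abs_le.1 h).1]) (abs_le.1 h).2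
  have : (1 - q ^ 2) ^ 2 ≤ (1 - q' ^ 2) ^ 2 := by
    apply pow_le_pow_left₀ <;> nlinarith
  linarith [show (1 - q ^ 2) ^ 2 = (q ^ 2 - 1) ^ 2 by ring,
    show (1 - q' ^ 2) ^ 2 = (q' ^ 2 - 1) ^ 2 by ring]

lemma Q_out {s0 s1 θ q : ℝ} (hs0 : 0 ≤ s0) (hs1 : 0 ≤ s1) (hθ0 : 0 ≤ θ) (hθ1 : θ ≤ 1)
    (h1 : 1 ≤ q) (h2 : q ≤ θ * ff s0 + (1 - θ) * ff s1) :
    (q ^ 2 - 1) ^ 2 ≤ θ * s0 + (1 - θ) * s1 := by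
  have := F_convex zero_le_one (by norm_num) (one_le_ff s0) (one_le_ff s1) hθ0 hθ1
  rw [F_ff hs0, F_ff hs1] at this
  exact (F_mono_out h1 h2).trans this

lemma Q_well {σ s0 s1 θ q : ℝ} (hσ : σ < 1) (hs0 : s0 ∈ Icc 0 σ) (hs1 : s1 ∈ Icc 0 σ)
    (hθ0 : 0 ≤ θ) (hθ1 : θ ≤ 1) (h1 : θ * gg s0 + (1 - θ) * gg s1 ≤ q)
    (h2 : q ≤ θ * ff s0 + (1 - θ) * ff s1) :
    (q ^ 2 - 1) ^ 2 ≤ θ * s0 + (1 - θ) * s1 + 9 / (2 * gg σ ^ 2) * θ * (s0 - s1) ^ 2 := by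
  have hpos : 0 ≤ 9 / (2 * gg σ ^ 2) * θ * (s0 - s1) ^ 2 := by positivity
  rcases le_total 1 q with hq | hq
  · have := Q_out hs0.1 hs1.1 hθ0 hθ1 hq h2
    linarith
  · have hm : 0 < gg σ := by
      unfold gg
      apply Real.sqrt_pos.2
      have : √σ < 1 := by rw [Real.sqrt_lt' one_pos]; simpa using hσ
      linarith
    have hmono : ∀ s, s ∈ Icc 0 σ → gg σ ≤ gg s := fun s hs => by
      unfold gg
      apply Real.sqrt_le_sqrt
      have := Real.sqrt_le_sqrt hs.2
      linarith
    have := F_semiconvex hm (hmono s0 hs0) (hmono s1 hs1) (gg_le_one s0) (gg_le_one s1) hθ0 hθ1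
    rw [F_gg hs0.1 (by linarith [hs0.2]), F_gg hs1.1 (by linarith [hs1.2])] at this
    have hz : 0 ≤ θ * gg s0 + (1 - θ) * gg s1 :=
      add_nonneg (mul_nonneg hθ0 (gg_nonneg _)) (mul_nonneg (by linarith) (gg_nonneg _))
    refine le_trans (F_anti_in (hz.trans h1) ?_ hq) this
    rw [abs_of_nonneg hz]; exact h1

lemma Q_in {σ s0 s1 θ q : ℝ} (hσ : 0 < σ) (hs0 : s0 ∈ Icc σ 1) (hs1 : s1 ∈ Icc σ 1)
    (hθ0 : 0 ≤ θ) (hθ1 : θ ≤ 1) (h : |q| ≤ θ * gg s0 + (1 - θ) * gg s1) :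
    θ * s0 + (1 - θ) * s1 - 12 / σ * θ * (s0 - s1) ^ 2 ≤ (q ^ 2 - 1) ^ 2 := by
  have a0 : 0 ≤ s0 := hσ.le.trans hs0.1
  have a1 : 0 ≤ s1 := hσ.le.trans hs1.1
  have := F_semiconcave hσ (gg_nonneg s0) (gg_nonneg s1) (gg_le_one s0) (gg_le_one s1)
    (by
      rw [gg_sq hs0.2, gg_sq hs1.2]
      have e0 := Real.sq_sqrt a0
      have := mul_nonneg (Real.sqrt_nonneg s0) (Real.sqrt_nonneg s1)
      nlinarith [sq_nonneg (√s1), hs0.1]) hθ0 hθ1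
  rw [F_gg a0 hs0.2, F_gg a1 hs1.2] at this
  refine this.trans (F_anti_in ?_ h ?_)
  · exact add_nonneg (mul_nonneg hθ0 (gg_nonneg _)) (mul_nonneg (by linarith) (gg_nonneg _))
  · nlinarith [gg_le_one s0, gg_le_one s1]

lemma le_ff_of {q s : ℝ} (h : (q ^ 2 - 1) ^ 2 ≤ s) : q ≤ ff s := by
  unfold ff
  apply Real.le_sqrt_of_sq_le
  have := Real.abs_le_sqrt h
  linarith [(abs_le.1 this).2]

lemma gg_le_of {q s : ℝ} (hq : 0 ≤ q) (h : (q ^ 2 - 1) ^ 2 ≤ s) : gg s ≤ q := by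
  unfold gg
  rw [Real.sqrt_le_left hq]
  have := Real.abs_le_sqrt h
  linarith [(abs_le.1 this).1]

lemma abs_le_gg {q s : ℝ} (hq : |q| ≤ 1) (h : s ≤ (q ^ 2 - 1) ^ 2) : |q| ≤ gg s := by
  unfold gg
  apply Real.abs_le_sqrt
  have h1 : q ^ 2 ≤ 1 := by rwa [sq_le_one_iff_abs_le_one]
  have : √s ≤ 1 - q ^ 2 := by
    rw [Real.sqrt_le_left (by linarith)]
    linarith [show (1 - q ^ 2) ^ 2 = (q ^ 2 - 1) ^ 2 by ring]
  linarith

lemma deriv_lin (k x : ℝ) : deriv (fun z : ℝ => k * z) x = k := by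
  simpa using ((hasDerivAt_id x).const_mul k).deriv

/-- No interior maximum of `P x + u` when the right-hand side is below one. -/
lemma no_max_well {P ε x : ℝ} {V u : ℝ → ℝ}
    (hu : ViscSub1 (fun x r p => ε * r + ((P + p) ^ 2 - 1) ^ 2 - V x) u)
    (hs : V x - ε * u x < 1) : ¬ IsLocalMax (fun z => P * z + u z) x := by
  intro hm
  have hm' : IsLocalMax (u - fun z => (-P) * z) x := by
    filter_upwards [hm] with z hz
    simp only [Pi.sub_apply]
    linarith
  have := hu (fun z => (-P) * z) (by fun_prop) x hm'
  rw [deriv_lin] at this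
  norm_num at this
  linarith

/-- No local minimum of `u - (t - P) x` when the right-hand side is positive. -/
lemma no_min_well {P ε x t : ℝ} {V u : ℝ → ℝ} (ht : t ^ 2 = 1)
    (hu : ViscSuper1 (fun x r p => ε * r + ((P + p) ^ 2 - 1) ^ 2 - V x) u)
    (hs : 0 < V x - ε * u x) : ¬ IsLocalMax (fun z => (t - P) * z - u z) x := by
  intro hm
  have hm' : IsLocalMin (u - fun z => (t - P) * z) x := by
    filter_upwards [hm] with z hz
    simp only [Pi.sub_apply]
    linarith
  have := hu (fun z => (t - P) * z) (by fun_prop) x hm'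
  rw [deriv_lin] at this
  simp only [add_sub_cancel, ht] at this
  norm_num at this
  linarith

lemma visc_bound {P c ε : ℝ} {V w v : ℝ → ℝ} (hV : Continuous V) (hε : 0 < ε) {Mw : ℝ}
    (hwc : Continuous w) (hwp : Function.Periodic w 1)
    (hw : ViscSol1 (fun x _ p => ((P + p) ^ 2 - 1) ^ 2 - V x - c) w) (hMw : ∀ x, |w x| ≤ Mw)
    (hvc : Continuous v) (hvp : Function.Periodic v 1)
    (hv : ViscSol1 (fun x r p => ε * r + ((P + p) ^ 2 - 1) ^ 2 - V x) v) :
    ∀ x, |v x + c / ε| ≤ 2 * Mw := by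
  have hce : ε * (c / ε) = c := by field_simp
  have h1 : ∀ z, v z ≤ w z + Mw - c / ε := by
    refine comparison (G := fun p => ((P + p) ^ 2 - 1) ^ 2) hε hV hvc hvp (by fun_prop)
      (fun x => by simp only [hwp x]) hv.1 ?_
    intro φ hφ x hm
    have hm' : IsLocalMin (w - φ) x := by
      filter_upwards [hm] with z hz
      simp only [Pi.sub_apply] at hz ⊢
      linarith
    have h := hw.2 φ hφ x hm'
    have h2 : 0 ≤ ε * (w x + Mw) := mul_nonneg hε.le (by linarith [abs_le.1 (hMw x)])
    simp only at h ⊢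
    rw [mul_sub, hce]
    linarith
  have h2 : ∀ z, w z - Mw - c / ε ≤ v z := by
    refine comparison (G := fun p => ((P + p) ^ 2 - 1) ^ 2) hε hV (by fun_prop)
      (fun x => by simp only [hwp x]) hvc hvp ?_ hv.2
    intro φ hφ x hm
    have hm' : IsLocalMax (w - φ) x := by
      filter_upwards [hm] with z hz
      simp only [Pi.sub_apply] at hz ⊢
      linarith
    have h := hw.1 φ hφ x hm'
    have h2 : 0 ≤ ε * (Mw - w x) := mul_nonneg hε.le (by linarith [abs_le.1 (hMw x)])
    simp only at h ⊢
    rw [mul_sub, hce]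
    linarith
  intro x
  have := abs_le.1 (hMw x)
  rw [abs_le]
  constructor <;> linarith [h1 x, h2 x]

lemma slope_bound {q K : ℝ} (h : (q ^ 2 - 1) ^ 2 ≤ K) : |q| ≤ K + 2 := by
  have hK : 0 ≤ K := le_trans (sq_nonneg _) h
  by_contra hcon
  push Not at hcon
  have h1 : (K + 2) ^ 2 < q ^ 2 := by
    rw [← sq_abs q]
    exact pow_lt_pow_left₀ hcon (by linarith) (by norm_num)
  have h2 : K + 3 ≤ q ^ 2 - 1 := by nlinarith
  nlinarith

lemma visc_lip {P ε K : ℝ} {V v : ℝ → ℝ} (hvc : Continuous v)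
    (hv : ViscSub1 (fun x r p => ε * r + ((P + p) ^ 2 - 1) ^ 2 - V x) v)
    (hK : ∀ x, V x - ε * v x ≤ K) : ∀ x y, |v x - v y| ≤ (K + 2 + |P|) * |x - y| := by
  have ht : ∀ φ : ℝ → ℝ, ContDiff ℝ 1 φ → ∀ x, IsLocalMax (v - φ) x →
      |deriv φ x| ≤ K + 2 + |P| := by
    intro φ hφ x hm
    have h := hv φ hφ x hm
    simp only at h
    have h2 := slope_bound (q := P + deriv φ x) (K := K) (by linarith [hK x])
    have h3 : |deriv φ x| ≤ |P + deriv φ x| + |P| := by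
      have := abs_sub (P + deriv φ x) P
      rwa [add_sub_cancel_left] at this
    linarith
  have key : ∀ x y, x < y → |v x - v y| ≤ (K + 2 + |P|) * |x - y| := by
    intro x y hxy
    have h1 := slope_upper hvc (α := x) (β := y) (B := K + 2 + |P|)
      (fun φ hφ z _ hm => (abs_le.1 (ht φ hφ z hm)).2) le_rfl hxy le_rfl
    have h2 := slope_lower hvc (α := x) (β := y) (A := -(K + 2 + |P|))
      (fun φ hφ z _ hm => (abs_le.1 (ht φ hφ z hm)).1) le_rfl hxy le_rfl
    rw [abs_sub_comm x y, abs_of_pos (sub_pos.2 hxy), abs_le]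
    constructor <;> linarith
  intro x y
  rcases lt_trichotomy x y with h | h | h
  · exact key x y h
  · simp [h]
  · rw [abs_sub_comm, abs_sub_comm x y]; exact key y x h

/-- The combination property (for `u` or for `-u`) in all cases. -/
def Comb (w : ℝ → ℝ → ℝ) : Prop :=
  ∀ η : ℝ, 0 < η → ∃ ε1 : ℝ, 0 < ε1 ∧ ∀ δ ε ε0 : ℝ, 0 < δ → δ < ε → ε < ε0 → ε0 < ε1 →
      (∀ x, |w δ x - w ε0 x| ≤ η) → ∀ x, w ε0 x - 3 * η ≤ w ε x

section cases

lemma case_zero {P M Vm c : ℝ} {V : ℝ → ℝ} {u : ℝ → ℝ → ℝ} (hc : c = 0) (hV : Continuous V)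
    (hVm : ∀ x, V x ≤ Vm) (hVm1 : Vm < 1) (hM0 : 0 ≤ M)
    (hu : ∀ ε : ℝ, 0 < ε → Continuous (u ε) ∧ Function.Periodic (u ε) 1 ∧
      ViscSol1 (fun x r p => ε * r + ((P + p) ^ 2 - 1) ^ 2 - V x) (u ε))
    (hM : ∀ ε : ℝ, 0 < ε → ∀ x, |u ε x + c / ε| ≤ M) :
    Comb (fun ε x => u ε x + c / ε) := by
  set σ := (1 + Vm) / 2 with hσ
  have hσ1 : σ < 1 := by linarith
  set εs := (1 - Vm) / (2 * (M + 1)) with hεs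
  have hεs0 : 0 < εs := by apply div_pos <;> linarith
  have hεsM : εs * (M + 1) = (1 - Vm) / 2 := by rw [hεs]; field_simp
  have hup : ∀ ε, 0 < ε → ε < εs → ∀ x, V x - ε * u ε x ≤ σ := by
    intro ε hε hεs' x
    have h1 := hM ε hε x
    rw [hc, zero_div, add_zero] at h1
    have h2 := (abs_le.1 h1).1
    have h3 : ε * (-M) ≤ ε * u ε x := mul_le_mul_of_nonneg_left h2 hε.le
    have h4 : ε * (M + 1) ≤ εs * (M + 1) := mul_le_mul_of_nonneg_right hεs'.le (by linarith)
    linarith [hVm x]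
  have hlo : ∀ ε, 0 < ε → ∀ x, 0 ≤ V x - ε * u ε x := by
    intro ε hε
    obtain ⟨h1, h2, h3⟩ := hu ε hε
    refine nonneg_of_touch h1 (by fun_prop) ?_
    intro φ hφ x hm
    have := h3.1 φ hφ x hm
    simp only at this
    linarith [sq_nonneg ((P + deriv φ x) ^ 2 - 1)]
  have hd : ∀ ε, 0 < ε → ∀ x, P * (x + 1) + u ε (x + 1) = P * x + u ε x + P := by
    intro ε hε x; rw [(hu ε hε).2.1 x]; ring
  have hC : 0 ≤ 9 / (2 * gg σ ^ 2) := by positivity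
  rcases le_total 0 P with hP | hP
  · refine core (G := fun p => ((P + p) ^ 2 - 1) ^ 2) (a := fun s => gg s - P)
      (b := fun s => ff s - P) (S := Icc 0 σ) (M := M) (C := 9 / (2 * gg σ ^ 2)) hV
      (gg_cont.sub continuous_const) (ff_cont.sub continuous_const) hC hεs0
      (fun ε hε _ => hu ε hε) (fun ε hε _ => hM ε hε)
      (fun ε hε hεs' x => ⟨hlo ε hε x, hup ε hε hεs' x⟩) ?_ ?_
    · intro ε hε hεs' φ hφ x hm
      obtain ⟨h1, h2, h3⟩ := hu ε hε
      have hmono := mono_of_no_max (W := fun z => P * z + u ε z) (by fun_prop) (hd ε hε)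
        (fun z => no_max_well h3.1 ((hup ε hε hεs' z).trans_lt hσ1)) hP
      have hq := test_ge_of_mono hφ hmono hm
      have hF := h3.1 φ hφ x hm
      simp only at hF
      have hF' : ((P + deriv φ x) ^ 2 - 1) ^ 2 ≤ V x - ε * u ε x := by linarith
      have e1 := gg_le_of (by linarith) hF'
      have e2 := le_ff_of hF'
      constructor <;> linarith
    · intro s0 hs0 s1 hs1 θ p h0 h1 ha hb
      exact Q_well hσ1 hs0 hs1 h0 h1 (by linarith) (by linarith)
  · refine core (G := fun p => ((P + p) ^ 2 - 1) ^ 2) (a := fun s => - ff s - P)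
      (b := fun s => - gg s - P) (S := Icc 0 σ) (M := M) (C := 9 / (2 * gg σ ^ 2)) hV
      (ff_cont.neg.sub continuous_const) (gg_cont.neg.sub continuous_const) hC hεs0
      (fun ε hε _ => hu ε hε) (fun ε hε _ => hM ε hε)
      (fun ε hε hεs' x => ⟨hlo ε hε x, hup ε hε hεs' x⟩) ?_ ?_
    · intro ε hε hεs' φ hφ x hm
      obtain ⟨h1, h2, h3⟩ := hu ε hε
      have hmono := anti_of_no_max (W := fun z => P * z + u ε z) (by fun_prop) (hd ε hε)
        (fun z => no_max_well h3.1 ((hup ε hε hεs' z).trans_lt hσ1)) hP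
      have hq := test_le_of_anti hφ hmono hm
      have hF := h3.1 φ hφ x hm
      simp only at hF
      have hF' : ((-(P + deriv φ x)) ^ 2 - 1) ^ 2 ≤ V x - ε * u ε x := by rw [neg_sq]; linarith
      have e1 := gg_le_of (by linarith) hF'
      have e2 := le_ff_of hF'
      constructor <;> linarith
    · intro s0 hs0 s1 hs1 θ p h0 h1 ha hb
      have := Q_well (q := -(P + p)) hσ1 hs0 hs1 h0 h1 (by linarith) (by linarith)
      rwa [neg_sq] at this

lemma s_low {V : ℝ → ℝ} {u : ℝ → ℝ → ℝ} {c M : ℝ} (hV0 : ∀ x, 0 ≤ V x) (hc : 0 < c) (hM0 : 0 ≤ M)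
    (hM : ∀ ε : ℝ, 0 < ε → ∀ x, |u ε x + c / ε| ≤ M) :
    ∃ εs : ℝ, 0 < εs ∧ ∀ ε, 0 < ε → ε < εs → ∀ x, c / 2 ≤ V x - ε * u ε x := by
  refine ⟨c / (2 * (M + 1)), by positivity, ?_⟩
  intro ε hε hεs x
  rw [lt_div_iff₀ (by positivity)] at hεs
  have h2 := (abs_le.1 (hM ε hε x)).2
  have h3 : ε * (u ε x + c / ε) ≤ ε * M := mul_le_mul_of_nonneg_left h2 hε.le
  have hce : ε * (c / ε) = c := by field_simp
  rw [mul_add, hce] at h3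
  linarith [hV0 x]

lemma case_out {P M c : ℝ} {V : ℝ → ℝ} {u : ℝ → ℝ → ℝ} (hc : 0 < c) (hV : Continuous V)
    (hV0 : ∀ x, 0 ≤ V x) (hM0 : 0 ≤ M) (hP : 1 ≤ |P|)
    (hu : ∀ ε : ℝ, 0 < ε → Continuous (u ε) ∧ Function.Periodic (u ε) 1 ∧
      ViscSol1 (fun x r p => ε * r + ((P + p) ^ 2 - 1) ^ 2 - V x) (u ε))
    (hM : ∀ ε : ℝ, 0 < ε → ∀ x, |u ε x + c / ε| ≤ M) :
    Comb (fun ε x => u ε x + c / ε) := by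
  obtain ⟨εs, hεs0, hlo⟩ := s_low hV0 hc hM0 hM
  have hd : ∀ t ε, 0 < ε → ∀ x, (t - P) * (x + 1) - u ε (x + 1) = (t - P) * x - u ε x + (t - P) := by
    intro t ε hε x; rw [(hu ε hε).2.1 x]; ring
  rcases le_abs.1 hP with hP | hP
  · refine core (G := fun p => ((P + p) ^ 2 - 1) ^ 2) (a := fun s => 1 - P)
      (b := fun s => ff s - P) (S := Ici 0) (M := M) (C := 0) hV
      continuous_const (ff_cont.sub continuous_const) le_rfl hεs0
      (fun ε hε _ => hu ε hε) (fun ε hε _ => hM ε hε)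
      (fun ε hε hεs' x => le_trans (by linarith) (hlo ε hε hεs' x)) ?_ ?_
    · intro ε hε hεs' φ hφ x hm
      obtain ⟨h1, h2, h3⟩ := hu ε hε
      have hmono := anti_of_no_max (W := fun z => (1 - P) * z - u ε z) (by fun_prop) (hd 1 ε hε)
        (fun z => no_min_well (by norm_num) h3.2 (by linarith [hlo ε hε hεs' z])) (by linarith)
      have hq := test_ge_of_mono (k := P - 1) hφ (fun y z hyz => by
        have := hmono y z hyz; linarith) hm
      have hF := h3.1 φ hφ x hm
      simp only at hF
      have e2 := le_ff_of (q := P + deriv φ x) (s := V x - ε * u ε x) (by linarith)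
      constructor <;> linarith
    · intro s0 hs0 s1 hs1 θ p h0 h1 ha hb
      have := Q_out (q := P + p) hs0 hs1 h0 h1 (by linarith) (by linarith)
      linarith
  · refine core (G := fun p => ((P + p) ^ 2 - 1) ^ 2) (a := fun s => -ff s - P)
      (b := fun s => -1 - P) (S := Ici 0) (M := M) (C := 0) hV
      (ff_cont.neg.sub continuous_const) continuous_const le_rfl hεs0
      (fun ε hε _ => hu ε hε) (fun ε hε _ => hM ε hε)
      (fun ε hε hεs' x => le_trans (by linarith) (hlo ε hε hεs' x)) ?_ ?_
    · intro ε hε hεs' φ hφ x hm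
      obtain ⟨h1, h2, h3⟩ := hu ε hε
      have hmono := mono_of_no_max (W := fun z => (-1 - P) * z - u ε z) (by fun_prop) (hd (-1) ε hε)
        (fun z => no_min_well (by norm_num) h3.2 (by linarith [hlo ε hε hεs' z])) (by linarith)
      have hq := test_le_of_anti (k := P + 1) hφ (fun y z hyz => by
        have := hmono y z hyz; linarith) hm
      have hF := h3.1 φ hφ x hm
      simp only at hF
      have e2 := le_ff_of (q := -(P + deriv φ x)) (s := V x - ε * u ε x)
        (by rw [neg_sq]; linarith)
      constructor <;> linarith
    · intro s0 hs0 s1 hs1 θ p h0 h1 ha hb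
      have := Q_out (q := -(P + p)) hs0 hs1 h0 h1 (by linarith) (by linarith)
      rw [neg_sq] at this
      linarith

lemma case_in {P M c : ℝ} {V : ℝ → ℝ} {u : ℝ → ℝ → ℝ} (hc : 0 < c) (hV : Continuous V)
    (hV0 : ∀ x, 0 ≤ V x) (hM0 : 0 ≤ M) (hP : |P| ≤ 1)
    (hu : ∀ ε : ℝ, 0 < ε → Continuous (u ε) ∧ Function.Periodic (u ε) 1 ∧
      ViscSol1 (fun x r p => ε * r + ((P + p) ^ 2 - 1) ^ 2 - V x) (u ε))
    (hM : ∀ ε : ℝ, 0 < ε → ∀ x, |u ε x + c / ε| ≤ M) :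
    Comb (fun ε x => (-u ε) x + (-c) / ε) := by
  obtain ⟨εs, hεs0, hlo⟩ := s_low hV0 hc hM0 hM
  have hd : ∀ t ε, 0 < ε → ∀ x, (t - P) * (x + 1) - u ε (x + 1) = (t - P) * x - u ε x + (t - P) := by
    intro t ε hε x; rw [(hu ε hε).2.1 x]; ring
  have hσ : 0 < c / 2 := by linarith
  have hP' := abs_le.1 hP
  have hsub : ∀ ε, 0 < ε → ε < εs → ∀ φ : ℝ → ℝ, ContDiff ℝ 1 φ → ∀ x, IsLocalMax (-u ε - φ) x →
      |P - deriv φ x| ≤ 1 ∧ V x - ε * u ε x ≤ ((P - deriv φ x) ^ 2 - 1) ^ 2 := by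
    intro ε hε hεs' φ hφ x hm
    obtain ⟨h1, h2, h3⟩ := hu ε hε
    have hmono := mono_of_no_max (W := fun z => (1 - P) * z - u ε z) (by fun_prop) (hd 1 ε hε)
        (fun z => no_min_well (by norm_num) h3.2 (by linarith [hlo ε hε hεs' z])) (by linarith)
    have hanti := anti_of_no_max (W := fun z => (-1 - P) * z - u ε z) (by fun_prop) (hd (-1) ε hε)
        (fun z => no_min_well (by norm_num) h3.2 (by linarith [hlo ε hε hεs' z])) (by linarith)
    have hq := test_ge_of_mono (u := -u ε) (k := 1 - P) hφ (fun y z hyz => by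
        have := hmono y z hyz; simp only [Pi.neg_apply] at this ⊢; linarith) hm
    have hq' := test_le_of_anti (u := -u ε) (k := -1 - P) hφ (fun y z hyz => by
        have := hanti y z hyz; simp only [Pi.neg_apply] at this ⊢; linarith) hm
    refine ⟨abs_le.2 ⟨by linarith, by linarith⟩, ?_⟩
    have := visc_neg h3.2 φ hφ x hm
    simp only [Pi.neg_apply, neg_neg, ← sub_eq_add_neg] at this
    linarith
  have hle1 : ∀ ε, 0 < ε → ε < εs → ∀ x, V x - ε * u ε x ≤ 1 := by
    intro ε hε hεs' x
    obtain ⟨h1, h2, h3⟩ := hu ε hε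
    have := nonneg_of_touch (u := -u ε) (h := fun x => 1 - (V x - ε * u ε x)) h1.neg
      (by fun_prop) (by
        intro φ hφ x hm
        obtain ⟨e1, e2⟩ := hsub ε hε hεs' φ hφ x hm
        have e3 : (P - deriv φ x) ^ 2 ≤ 1 := by rwa [sq_le_one_iff_abs_le_one]
        have e4 := sq_nonneg (P - deriv φ x)
        nlinarith) x
    linarith
  refine core (G := fun p => -((P + -p) ^ 2 - 1) ^ 2) (V := fun x => - V x)
    (a := fun s => P - gg (-s))
    (b := fun s => P + gg (-s)) (S := Icc (-1) (-(c / 2))) (M := M) (C := 12 / (c / 2))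
    (u := fun ε => -u ε) hV.neg
    (continuous_const.sub (gg_cont.comp continuous_neg))
    (continuous_const.add (gg_cont.comp continuous_neg)) (by positivity) hεs0
    ?_ ?_ ?_ ?_ ?_
  · intro ε hε _
    obtain ⟨h1, h2, h3⟩ := hu ε hε
    refine ⟨h1.neg, fun x => by simp [h2 x], ?_, ?_⟩
    · intro φ hφ x hm
      have := visc_neg h3.2 φ hφ x hm
      simp only [Pi.neg_apply, neg_neg] at this ⊢
      linarith
    · intro φ hφ x hm
      have := visc_neg' h3.1 φ hφ x hm
      simp only [Pi.neg_apply, neg_neg] at this ⊢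
      linarith
  · intro ε hε _ x
    have := hM ε hε x
    rw [← abs_neg] at this
    convert this using 2
    simp only [Pi.neg_apply]; ring
  · intro ε hε hεs' x
    have e1 := hlo ε hε hεs' x
    have e2 := hle1 ε hε hεs' x
    simp only [Pi.neg_apply, mem_Icc]
    constructor <;> linarith
  · intro ε hε hεs' φ hφ x hm
    obtain ⟨e1, e2⟩ := hsub ε hε hεs' φ hφ x hm
    have e3 := abs_le.1 (abs_le_gg e1 e2)
    have e4 : -(-V x - ε * (-u ε) x) = V x - ε * u ε x := by simp only [Pi.neg_apply]; ring
    simp only [e4]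
    constructor <;> linarith
  · intro s0 hs0 s1 hs1 θ p h0 h1 ha hb
    have := Q_in (s0 := -s0) (s1 := -s1) (q := P + -p) hσ ⟨by linarith [hs0.2], by linarith [hs0.1]⟩
      ⟨by linarith [hs1.2], by linarith [hs1.1]⟩ h0 h1 (abs_le.2 ⟨by linarith, by linarith⟩)
    have e : (-s0 - -s1) ^ 2 = (s0 - s1) ^ 2 := by ring
    rw [e] at this
    linarith

end cases

theorem stmt5 (P : ℝ) (V : ℝ → ℝ) (hVcont : Continuous V) (hVper : Function.Periodic V 1)
    (hVmin : sInf (Set.range V) = 0) (hVmax : sSup (Set.range V) < 1)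
    (Hbar : ℝ)
    -- H̄(P) is such that the ergodic equation has a continuous 1-periodic viscosity solution
    (hHbar : ∃ w : ℝ → ℝ, Continuous w ∧ Function.Periodic w 1 ∧
      ViscSol1 (fun x _ p => ((P + p) ^ 2 - 1) ^ 2 - V x - Hbar) w)
    -- for each ε > 0, u ε is a continuous 1-periodic viscosity solution of the discounted problem
    (u : ℝ → ℝ → ℝ)
    (hu : ∀ ε : ℝ, 0 < ε → Continuous (u ε) ∧ Function.Periodic (u ε) 1 ∧
      ViscSol1 (fun x r p => ε * r + ((P + p) ^ 2 - 1) ^ 2 - V x) (u ε)) :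
    ∃ u0 : ℝ → ℝ, Continuous u0 ∧ Function.Periodic u0 1 ∧
      ViscSol1 (fun x _ p => ((P + p) ^ 2 - 1) ^ 2 - V x - Hbar) u0 ∧
      TendstoUniformly (fun ε x => u ε x + Hbar / ε) u0 (𝓝[>] (0 : ℝ)) := by
  obtain ⟨w, hwc, hwp, hw⟩ := hHbar
  obtain ⟨MV, hMV0, hMV⟩ := per_bdd hVcont hVper
  obtain ⟨Mw, hMw0, hMw⟩ := per_bdd hwc hwp
  have hbb : BddBelow (range V) := ⟨-MV, by rintro _ ⟨x, rfl⟩; exact (abs_le.1 (hMV x)).1⟩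
  have hba : BddAbove (range V) := ⟨MV, by rintro _ ⟨x, rfl⟩; exact (abs_le.1 (hMV x)).2⟩
  have hV0 : ∀ x, 0 ≤ V x := fun x => hVmin ▸ csInf_le hbb ⟨x, rfl⟩
  have hVm : ∀ x, V x ≤ sSup (range V) := fun x => le_csSup hba ⟨x, rfl⟩
  have hc0 : 0 ≤ Hbar := by
    have h1 : ∀ z, 0 ≤ V z + Hbar := by
      refine nonneg_of_touch hwc (by fun_prop) ?_
      intro φ hφ x hm
      have := hw.1 φ hφ x hm
      simp only at this
      linarith [sq_nonneg ((P + deriv φ x) ^ 2 - 1)]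
    have h2 : -Hbar ≤ sInf (range V) :=
      le_csInf (range_nonempty V) (by rintro _ ⟨x, rfl⟩; linarith [h1 x])
    linarith
  set M := 2 * Mw with hMdef
  have hM0 : 0 ≤ M := by positivity
  have hM : ∀ ε : ℝ, 0 < ε → ∀ x, |u ε x + Hbar / ε| ≤ M := fun ε hε =>
    visc_bound hVcont hε hwc hwp hw hMw (hu ε hε).1 (hu ε hε).2.1 (hu ε hε).2.2
  have hL : ∀ ε : ℝ, 0 < ε → ε < 1 → ∀ x y,
      |u ε x - u ε y| ≤ ((1 + Hbar + M) + 2 + |P|) * |x - y| := by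
    intro ε hε hε1
    refine visc_lip (hu ε hε).1 (hu ε hε).2.2.1 ?_
    intro x
    have h2 := (abs_le.1 (hM ε hε x)).1
    have h3 : ε * (-M) ≤ ε * (u ε x + Hbar / ε) := mul_le_mul_of_nonneg_left h2 hε.le
    have hce : ε * (Hbar / ε) = Hbar := by field_simp
    rw [mul_add, hce] at h3
    have h4 : ε * M ≤ 1 * M := mul_le_mul_of_nonneg_right hε1.le hM0
    linarith [hVm x]
  have hconv : ∃ v : ℝ → ℝ, Continuous v ∧ Function.Periodic v 1 ∧
      TendstoUniformly (fun ε x => u ε x + Hbar / ε) v (𝓝[>] (0 : ℝ)) := by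
    have hplus : Comb (fun ε x => u ε x + Hbar / ε) → ∃ v : ℝ → ℝ, Continuous v ∧
        Function.Periodic v 1 ∧
        TendstoUniformly (fun ε x => u ε x + Hbar / ε) v (𝓝[>] (0 : ℝ)) := by
      intro hcomb
      refine compact_conv (εs := 1) (M := M) (L := (1 + Hbar + M) + 2 + |P|) one_pos ?_ ?_ ?_ ?_ hcomb
      · intro ε hε _; exact (hu ε hε).1.add continuous_const
      · intro ε hε _ x; simp only [(hu ε hε).2.1 x]
      · intro ε hε _ x; exact hM ε hε x
      · intro ε hε h1 x y
        simpa using hL ε hε h1 x y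
    rcases hc0.eq_or_lt with hc | hc
    · exact hplus (case_zero hc.symm hVcont hVm hVmax hM0 hu hM)
    rcases le_total 1 |P| with hP | hP
    · exact hplus (case_out hc hVcont hV0 hM0 hP hu hM)
    · have hcomb := case_in hc hVcont hV0 hM0 hP hu hM
      have hex : ∃ v : ℝ → ℝ, Continuous v ∧ Function.Periodic v 1 ∧
          TendstoUniformly (fun ε x => (-u ε) x + (-Hbar) / ε) v (𝓝[>] (0 : ℝ)) := by
        refine compact_conv (εs := 1) (M := M) (L := (1 + Hbar + M) + 2 + |P|)
          one_pos ?_ ?_ ?_ ?_ hcomb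
        · intro ε hε _; exact (hu ε hε).1.neg.add continuous_const
        · intro ε hε _ x; simp only [Pi.neg_apply, (hu ε hε).2.1 x]
        · intro ε hε _ x
          have := hM ε hε x
          rw [← abs_neg] at this
          convert this using 2
          simp only [Pi.neg_apply]; ring
        · intro ε hε hε1 x y
          have := hL ε hε hε1 x y
          rw [← abs_neg] at this
          convert this using 2
          simp only [Pi.neg_apply]; ring
      obtain ⟨v, h1, h2, h3⟩ := hex
      refine ⟨fun x => - v x, h1.neg, fun x => by simp only [h2 x], ?_⟩
      rw [Metric.tendstoUniformly_iff] at h3 ⊢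
      intro η hη
      filter_upwards [h3 η hη] with ε h x
      have := h x
      rw [Real.dist_eq, ← abs_neg] at this
      rw [Real.dist_eq]
      convert this using 2
      simp only [Pi.neg_apply]; ring
  obtain ⟨v, hvc, hvp, hlim⟩ := hconv
  refine ⟨v, hvc, hvp, ⟨?_, ?_⟩, hlim⟩
  · exact stability (G := fun p => ((P + p) ^ 2 - 1) ^ 2) (by fun_prop) hVcont hvc hvp
      (fun ε hε => ⟨(hu ε hε).1, (hu ε hε).2.2.1⟩) hlim
  · have hst := stability (G := fun p => -((P + -p) ^ 2 - 1) ^ 2) (V := fun x => - V x) (c := -Hbar)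
      (u := fun ε => -u ε) (v := -v) (by fun_prop) hVcont.neg hvc.neg
      (fun x => by simp only [Pi.neg_apply, hvp x])
      (by
        intro ε hε
        obtain ⟨h1, h2, h3⟩ := hu ε hε
        refine ⟨h1.neg, ?_⟩
        intro φ hφ x hm
        have := visc_neg h3.2 φ hφ x hm
        simp only [Pi.neg_apply, neg_neg] at this ⊢
        linarith)
      (by
        rw [Metric.tendstoUniformly_iff] at hlim ⊢
        intro η hη
        filter_upwards [hlim η hη] with ε h x
        have := h x
        rw [Real.dist_eq, ← abs_neg] at this
        rw [Real.dist_eq]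
        convert this using 2
        simp only [Pi.neg_apply]; ring)
    intro φ hφ x hm
    have hm' : IsLocalMin (- -v - φ) x := by rwa [neg_neg]
    have := visc_neg' hst φ hφ x hm'
    simp only [neg_neg] at this ⊢
    linarith
end
end

section
/- Let 0 < s ≤ 1/5 and fix y ∈ ℝ. Let w : ℝ → ℝ be the continuous 1-periodic function with w(y) = 0, w'(x) = −7/2 for x ∈ (y − 1/8, y) and w'(x) = 1/2 for x ∈ (y, y + 7/8). Then w is a viscosity subsolution of F(|3/2 + w'(x)|) − V(x) = 1 on ℝ. -/
open Filter Set
open scoped Topology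

noncomputable section

/-- The kinetic energy `F : F(p) = p` on `[0,1]`, `F(p) = 1` on `[1,2]`, `F(p) = p - 1` for `p ≥ 2`. -/
def Fk (p : ℝ) : ℝ := if p ≤ 1 then p else if p ≤ 2 then 1 else p - 1

/-- The 1-periodic potential: `V(x) = x` on `[0,s]`, `V(x) = 2s - x` on `[s,2s]`, `V(x) = 0`
on `[2s,1]`. -/
def Vs (s x : ℝ) : ℝ :=
  if Int.fract x ≤ s then Int.fract x
  else if Int.fract x ≤ 2 * s then 2 * s - Int.fract x
  else 0

theorem aux_mono (w : ℝ → ℝ) (hc : Continuous w) (a b d c : ℝ) (hcd : 0 ≤ d + c)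
    (h : ∀ x ∈ Set.Ioo a b, HasDerivAt w d x) :
    MonotoneOn (fun x => w x + c * x) (Icc a b) := by
  have hd : ∀ x ∈ Set.Ioo a b, HasDerivAt (fun x => w x + c * x) (d + c) x := by
    intro x hx
    simpa using (h x hx).fun_add ((hasDerivAt_id x).const_mul c)
  apply monotoneOn_of_deriv_nonneg (convex_Icc a b)
  · exact (by fun_prop : Continuous (fun x => w x + c * x)).continuousOn
  · rw [interior_Icc]
    exact fun x hx => (hd x hx).differentiableAt.differentiableWithinAt
  · rw [interior_Icc]
    intro x hx
    rw [(hd x hx).deriv]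
    exact hcd

theorem aux_left (f : ℝ → ℝ) (d x : ℝ) (h : HasDerivAt f d x)
    (hm : ∀ᶠ z in 𝓝[<] x, f x ≤ f z) : d ≤ 0 := by
  have ht := (hasDerivAt_iff_tendsto_slope.1 h).mono_left
    (nhdsWithin_mono x (fun z (hz : z < x) => hz.ne) : 𝓝[<] x ≤ 𝓝[≠] x)
  refine le_of_tendsto ht ?_
  filter_upwards [hm, self_mem_nhdsWithin] with z hz hz'
  rw [slope_def_field]
  exact div_nonpos_of_nonneg_of_nonpos (by linarith) (by have : z < x := hz'; linarith)

theorem aux_right (f : ℝ → ℝ) (d x : ℝ) (h : HasDerivAt f d x)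
    (hm : ∀ᶠ z in 𝓝[>] x, f x ≤ f z) : 0 ≤ d := by
  have ht := (hasDerivAt_iff_tendsto_slope.1 h).mono_left
    (nhdsWithin_mono x (fun z (hz : x < z) => hz.ne') : 𝓝[>] x ≤ 𝓝[≠] x)
  refine ge_of_tendsto ht ?_
  filter_upwards [hm, self_mem_nhdsWithin] with z hz hz'
  rw [slope_def_field]
  exact div_nonneg (by linarith) (by have : x < z := hz'; linarith)

theorem stmt12 (s : ℝ) (hs : 0 < s) (hs' : s ≤ 1 / 5) (y : ℝ)
    (w : ℝ → ℝ) (hwcont : Continuous w) (hwper : Function.Periodic w 1) (hwy : w y = 0)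
    (hw1 : ∀ x ∈ Set.Ioo (y - 1 / 8) y, HasDerivAt w (-(7 : ℝ) / 2) x)
    (hw2 : ∀ x ∈ Set.Ioo y (y + 7 / 8), HasDerivAt w (1 / 2) x) :
    ViscSub1 (fun x _ p => Fk |3 / 2 + p| - Vs s x - 1) w := by
  intro φ hφ x₀ hmax
  have hD : HasDerivAt φ (deriv φ x₀) x₀ :=
    ((hφ.differentiable (by norm_num)) x₀).hasDerivAt
  have hmax' : ∀ᶠ z in 𝓝 x₀, w z - φ z ≤ w x₀ - φ x₀ := hmax
  have hU : Icc (y - 1 / 8) y ∪ Icc y (y + 7 / 8) = Icc (y - 1 / 8) (y + 7 / 8) :=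
    Icc_union_Icc_eq_Icc (by linarith) (by linarith)
  have g1 : IsGreatest (Icc (y - 1 / 8) y) y := isGreatest_Icc (by linarith)
  have g2 : IsLeast (Icc y (y + 7 / 8)) y := isLeast_Icc (by linarith)
  have hA : MonotoneOn (fun x => w x + 7 / 2 * x) (Icc (y - 1 / 8) (y + 7 / 8)) := by
    rw [← hU]
    exact (aux_mono w hwcont _ _ _ _ (by norm_num) hw1).union_right
      (aux_mono w hwcont _ _ _ _ (by norm_num) hw2) g1 g2
  have hB : MonotoneOn (fun x => -w x + 1 / 2 * x) (Icc (y - 1 / 8) (y + 7 / 8)) := by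
    rw [← hU]
    exact (aux_mono (fun x => -w x) hwcont.neg _ _ _ _ (by norm_num)
        (fun x hx => (hw1 x hx).neg)).union_right
      (aux_mono (fun x => -w x) hwcont.neg _ _ _ _ (by norm_num)
        (fun x hx => (hw2 x hx).neg)) g1 g2
  have hper : ∀ (n : ℤ) x, w (x - n) = w x := fun n x => by
    simpa using hwper.sub_zsmul_eq n (x := x)
  have h1 : deriv φ x₀ - 1 / 2 ≤ 0 := by
    obtain ⟨n, hn, -⟩ := existsUnique_sub_zsmul_mem_Ioc (one_pos : (0 : ℝ) < 1) x₀ (y - 1 / 8)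
    simp only [zsmul_eq_mul, mul_one, mem_Ioc] at hn
    have hd : HasDerivAt (fun x => φ x - 1 / 2 * x) (deriv φ x₀ - 1 / 2) x₀ := by
      simpa using hD.fun_sub ((hasDerivAt_id x₀).const_mul (1 / 2 : ℝ))
    refine aux_left _ _ _ hd ?_
    have hnear : ∀ᶠ z in 𝓝 x₀, y - 1 / 8 + n < z := lt_mem_nhds (by linarith)
    filter_upwards [nhdsWithin_le_nhds hmax', nhdsWithin_le_nhds hnear, self_mem_nhdsWithin]
      with z hz1 hz2 hz3
    have hz4 : z < x₀ := hz3
    have := hB (a := z - n) (b := x₀ - n) ⟨by linarith, by linarith⟩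
      ⟨by linarith, by linarith⟩ (by linarith)
    simp only [hper] at this
    linarith
  have h2 : 0 ≤ deriv φ x₀ + 7 / 2 := by
    obtain ⟨n, hn, -⟩ := existsUnique_sub_zsmul_mem_Ico (one_pos : (0 : ℝ) < 1) x₀ (y - 1 / 8)
    simp only [zsmul_eq_mul, mul_one, mem_Ico] at hn
    have hd : HasDerivAt (fun x => φ x + 7 / 2 * x) (deriv φ x₀ + 7 / 2) x₀ := by
      simpa using hD.fun_add ((hasDerivAt_id x₀).const_mul (7 / 2 : ℝ))
    refine aux_right _ _ _ hd ?_
    have hnear : ∀ᶠ z in 𝓝 x₀, z < y + 7 / 8 + n := gt_mem_nhds (by linarith)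
    filter_upwards [nhdsWithin_le_nhds hmax', nhdsWithin_le_nhds hnear, self_mem_nhdsWithin]
      with z hz1 hz2 hz3
    have hz4 : x₀ < z := hz3
    have := hA (a := x₀ - n) (b := z - n) ⟨by linarith, by linarith⟩
      ⟨by linarith, by linarith⟩ (by linarith)
    simp only [hper] at this
    linarith
  have hF : Fk |3 / 2 + deriv φ x₀| ≤ 1 := by
    have : |3 / 2 + deriv φ x₀| ≤ 2 := abs_le.2 ⟨by linarith, by linarith⟩
    unfold Fk
    split_ifs <;> linarith
  have hV : 0 ≤ Vs s x₀ := by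
    have := Int.fract_nonneg x₀
    unfold Vs
    split_ifs <;> linarith
  show Fk |3 / 2 + deriv φ x₀| - Vs s x₀ - 1 ≤ 0
  linarith
end
end
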